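/- arXiv:2506.06263 — 3 statements merged into one kernel-verified Lean document; each statement's English description precedes it below -/
import Mathlib

section
/- Let n ≥ 2, m ≥ 1 be integers and let (r^{(n)}_j)_{1 ≤ j ≤ n} be a nondecreasing sequence of positive reals, and set P_{n,m}(z) = Π_{j=1}^n (z^m − (r^{(n)}_j)^m). Then the m-th derivative of P_{n,m} can be written as P_{n,m}^{(m)}(z) = ((nm)!/((n−1)m)!) · Π_{j=1}^{n−1} (z^m − (R^{(n)}_j)^m) for some nondecreasing sequence (R^{(n)}_j)_{1 ≤ j ≤ n−1} of positive numbers. Moreover, if (r_j)_{1 ≤ j ≤ n} is a strictly increasing sequence of positive reals with α = max_{1 ≤ j ≤ n−1} r_j/r_{j+1}, and if r^{(n)}_j ≤ r_j for all 1 ≤ j ≤ n, then for all 1 ≤ j ≤ n−1, R^{(n)}_j ≤ min(1, (j+1)/((j+2)(1 − α^m))) · r_{j+1}. -/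
/-!
Put `w = z ^ m` and write `P(z) = f(w)` with `f = ∏ (w - rn_j ^ m)` of degree `n = N + 1`.
Since `d/dz (z ^ s g(w)) = z ^ (s - 1) (s g + m w g')(w)`, the first `k` derivatives of `P` have
the form `z ^ (m - k) g_k(w)` where `g_1 = m f'` and `g_{k+1} = m (κ g_k + w g_k')` with
`κ = (m - k) / m`, a number of `(0, 1)` for `1 ≤ k < m`. Splitting off the smallest root `x_0` of
`f`, the polynomial `f'` is also of this shape: `f' = κ Q + (w - x_0) Q'` with `κ = 1` and
`f = (w - x_0) Q`. So every step applies the operator `Q ↦ κ Q + (w - a) Q'` with `0 < κ ≤ 1` and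
`a` not larger than the roots of `Q`.

Let `x_0 = a` and let `x_1 ≤ x_2 ≤ …` be the roots of `Q`. Then `κ Q + (w - a) Q'` is real-rooted
and its roots satisfy `x_j ≤ b_j ≤ (x_j + (j + 1) x_{j+1}) / (j + 2)` (`polar_monotone`). For
distinct `x_j`, Rolle's theorem for `(w - a) ^ κ Q(w)` provides a root in each gap
(`polar_exists_root`), and the upper bound comes from the partial fractions
`κ / (w - a) + ∑ 1 / (w - x_i) = 0` (`polar_root_le`). The general case is a limit: the
inequalities are closed conditions and the `b_j` stay in a compact set.

If `x_j ≤ β A_{j+1}` and `x_{j+1} ≤ A_{j+1}`, the bound reads `b_j ≤ t_j A_{j+1}` with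
`t_j = (j + 1 + β) / (j + 2)`. As `t_j` increases with `j`, the numbers `t_j A_{j+1}` again have
successive ratios at most `β`, so the estimate can be iterated
(`iterate_derivative_chain`). With `A_j = r_j ^ m` and `β = α ^ m`, after `m` steps one has
`R_j ^ m ≤ t_j ^ m r_{j+1} ^ m`, and both `t_j ≤ 1` and
`t_j ≤ (j + 2) / ((j + 3) (1 - β))` are elementary (here `j` is counted from `0`).
-/

open Polynomial

/-! ### Products of linear factors -/

/-- The monic polynomial `∏_{i < N} (X - x i)`; the terms `x i` with `i ≥ N` play no role. -/
noncomputable def rootProd (N : ℕ) (x : ℕ → ℝ) : ℝ[X] :=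
  ∏ i ∈ Finset.range N, (X - C (x i))

lemma rootProd_monic (N : ℕ) (x : ℕ → ℝ) : (rootProd N x).Monic :=
  monic_prod_of_monic _ _ fun i _ => monic_X_sub_C (x i)

lemma rootProd_natDegree (N : ℕ) (x : ℕ → ℝ) : (rootProd N x).natDegree = N := by
  unfold rootProd
  rw [natDegree_prod_of_monic _ _ fun i _ => monic_X_sub_C (x i)]
  simp

lemma rootProd_eval (N : ℕ) (x : ℕ → ℝ) (w : ℝ) :
    (rootProd N x).eval w = ∏ i ∈ Finset.range N, (w - x i) := by
  simp [rootProd, eval_prod]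

lemma rootProd_derivative_eval (N : ℕ) (x : ℕ → ℝ) (w : ℝ) :
    (derivative (rootProd N x)).eval w =
      ∑ i ∈ Finset.range N, ∏ k ∈ (Finset.range N).erase i, (w - x k) := by
  rw [rootProd, derivative_prod_finset]
  simp [eval_finsetSum, eval_prod]

/-! ### Roots under one first-order operator -/

/-- `N` distinct roots determine `κ Q + (X - a) Q'`, which has degree `N` and leading coefficient
`N + κ` when `Q` is monic of degree `N`. -/
lemma polar_eq_of_roots (N : ℕ) (κ a : ℝ) (q b : ℕ → ℝ)
    (hb : Set.InjOn b (Finset.range N))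
    (h : ∀ j < N, κ * (rootProd N q).eval (b j)
      + (b j - a) * (derivative (rootProd N q)).eval (b j) = 0) :
    C κ * rootProd N q + (X - C a) * derivative (rootProd N q)
      = C (N + κ) * rootProd N b := by
  rw [← sub_eq_zero]
  refine eq_zero_of_degree_lt_of_eval_index_eq_zero (Finset.range N) hb ?_ ?_
  · rw [Finset.card_range, degree_lt_iff_coeff_zero]
    intro k hk
    have h1 : (X * derivative (rootProd N q)).coeff k = k * (rootProd N q).coeff k := by
      cases k with
      | zero => simp
      | succ k => rw [coeff_X_mul, coeff_derivative]; push_cast; ring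
    have h2 : (derivative (rootProd N q)).coeff k = 0 := by
      rw [coeff_derivative, coeff_eq_zero_of_natDegree_lt, zero_mul]
      rw [rootProd_natDegree]; omega
    have h3 : (rootProd N q).coeff k = (rootProd N b).coeff k := by
      rcases hk.eq_or_lt with rfl | hlt
      · have e1 := (rootProd_monic N q).coeff_natDegree
        have e2 := (rootProd_monic N b).coeff_natDegree
        rw [rootProd_natDegree] at e1 e2
        rw [e1, e2]
      · rw [coeff_eq_zero_of_natDegree_lt, coeff_eq_zero_of_natDegree_lt] <;>
          rwa [rootProd_natDegree]
    have h4 : ((N : ℝ) - k) * (rootProd N b).coeff k = 0 := by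
      rcases hk.eq_or_lt with rfl | hlt
      · simp
      · rw [coeff_eq_zero_of_natDegree_lt, mul_zero]
        rwa [rootProd_natDegree]
    rw [coeff_sub, coeff_add, sub_mul, coeff_sub, h1, coeff_C_mul, coeff_C_mul, coeff_C_mul,
      h2, h3]
    linear_combination -h4
  · intro j hj
    have h0 : (rootProd N b).eval (b j) = 0 := by
      rw [rootProd_eval]
      exact Finset.prod_eq_zero hj (sub_self _)
    have := h j (Finset.mem_range.1 hj)
    simp [h0, this]

/-- The function `(w - x 0) ^ κ * Q(w)` vanishes at all the points `x 0, …, x N`, and between them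
its derivative is `(w - x 0) ^ (κ - 1) * (κ Q + (w - x 0) Q')(w)`, so Rolle's theorem applies. -/
lemma polar_exists_root (N : ℕ) (κ : ℝ) (hκ : 0 < κ) (x : ℕ → ℝ) (hx : StrictMono x)
    (j : ℕ) (hj : j < N) :
    ∃ w ∈ Set.Ioo (x j) (x (j + 1)), κ * (rootProd N fun i => x (i + 1)).eval w
      + (w - x 0) * (derivative (rootProd N fun i => x (i + 1))).eval w = 0 := by
  set Q := rootProd N fun i => x (i + 1) with hQ
  have hx0 : ∀ w, x j < w → 0 < w - x 0 := fun w hw =>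
    sub_pos.2 ((hx.monotone (Nat.zero_le j)).trans_lt hw)
  have hzero : ∀ k ≤ N, (x k - x 0) ^ κ * Q.eval (x k) = 0 := by
    intro k hk
    cases k with
    | zero => simp [Real.zero_rpow hκ.ne']
    | succ k =>
      rw [hQ, rootProd_eval, Finset.prod_eq_zero (Finset.mem_range.2 hk) (sub_self _), mul_zero]
  obtain ⟨w, hw, hw0⟩ := exists_hasDerivAt_eq_zero (f := fun w => (w - x 0) ^ κ * Q.eval w)
    (f' := fun w => (1 * κ * (w - x 0) ^ (κ - 1)) * Q.eval w
      + (w - x 0) ^ κ * (derivative Q).eval w) (hx (Nat.lt_succ_self j))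
    (((continuous_id.sub continuous_const).rpow_const fun _ => Or.inr hκ.le).mul
      Q.continuous).continuousOn
    ((hzero j hj.le).trans (hzero (j + 1) hj).symm)
    (fun w hw => (((hasDerivAt_id w).sub_const (x 0)).rpow_const
      (Or.inl (hx0 w hw.1).ne')).mul (Q.hasDerivAt w))
  refine ⟨w, hw, ?_⟩
  have hpos := hx0 w hw.1
  have hne := (Real.rpow_pos_of_pos hpos (κ - 1)).ne'
  have e : (w - x 0) ^ κ = (w - x 0) ^ (κ - 1) * (w - x 0) := by
    rw [← Real.rpow_add_one hpos.ne']; ring_nf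
  refine (mul_eq_zero.1 (?_ : (w - x 0) ^ (κ - 1) * _ = 0)).resolve_left hne
  simp only [e] at hw0
  linear_combination hw0

/-- In `κ / (w - x 0) + ∑ 1 / (w - x (i + 1)) = 0`, the terms beyond `x (j + 1)` are negative and
the `j + 1` terms below `w` are at most `1 / (w - x j)`, whence
`1 / (x (j + 1) - w) ≤ (j + 1) / (w - x j)`. -/
lemma polar_root_le (N : ℕ) (κ : ℝ) (hκ1 : κ ≤ 1) (x : ℕ → ℝ)
    (hx : StrictMono x) (j : ℕ) (hj : j < N) (w : ℝ) (hw : w ∈ Set.Ioo (x j) (x (j + 1)))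
    (h0 : κ * (rootProd N fun i => x (i + 1)).eval w
      + (w - x 0) * (derivative (rootProd N fun i => x (i + 1))).eval w = 0) :
    w ≤ (x j + (j + 1) * x (j + 1)) / (j + 2) := by
  obtain ⟨hw1, hw2⟩ := hw
  have hlow : ∀ i ≤ j, x i ≤ x j := fun i hi => hx.monotone hi
  have hhigh : ∀ i, j + 1 ≤ i → x (j + 1) ≤ x i := fun i hi => hx.monotone hi
  have hne : ∀ i, w - x i ≠ 0 := by
    intro i
    rcases Nat.lt_or_ge j i with h | h
    · have := hhigh i h; exact (by linarith : w - x i < 0).ne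
    · have := hlow i h; exact (by linarith : 0 < w - x i).ne'
  have hpos : 0 < w - x 0 := by have := hlow 0 (Nat.zero_le _); linarith
  -- dividing by `(w - x 0) * Q(w)` turns the equation into a sum of partial fractions
  have hsum : κ / (w - x 0) + ∑ i ∈ Finset.range N, 1 / (w - x (i + 1)) = 0 := by
    rw [rootProd_eval, rootProd_derivative_eval] at h0
    have hP : ∏ i ∈ Finset.range N, (w - x (i + 1)) ≠ 0 :=
      Finset.prod_ne_zero_iff.2 fun i _ => hne _
    have hS : ∑ i ∈ Finset.range N, ∏ k ∈ (Finset.range N).erase i, (w - x (k + 1))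
        = (∏ i ∈ Finset.range N, (w - x (i + 1))) *
          ∑ i ∈ Finset.range N, 1 / (w - x (i + 1)) := by
      rw [Finset.mul_sum]
      refine Finset.sum_congr rfl fun i hi => ?_
      rw [← Finset.mul_prod_erase _ _ hi]
      field_simp [hne (i + 1)]
    rw [hS] at h0
    refine (mul_eq_zero.1
      (?_ : ((w - x 0) * ∏ i ∈ Finset.range N, (w - x (i + 1))) * _ = 0)).resolve_left
      (mul_ne_zero (hne 0) hP)
    have := mul_div_cancel₀ κ (hne 0)
    rw [← h0, mul_add]
    congr 1
    · field_simp
    · ring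
  have hj1 : 0 < w - x j := by linarith
  have hj2 : 0 < x (j + 1) - w := by linarith
  have hκ' : κ / (w - x 0) ≤ 1 / (w - x j) :=
    div_le_div₀ zero_le_one hκ1 hj1 (by linarith [hlow 0 (Nat.zero_le _)])
  have hle : ∑ i ∈ Finset.range N, 1 / (w - x (i + 1))
      ≤ j * (1 / (w - x j)) - 1 / (x (j + 1) - w) := by
    obtain ⟨d, rfl⟩ : ∃ d, N = j + 1 + d := ⟨N - (j + 1), by omega⟩
    rw [Finset.sum_range_add, Finset.sum_range_succ]
    have a1 : ∑ i ∈ Finset.range j, 1 / (w - x (i + 1)) ≤ j * (1 / (w - x j)) := by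
      have := Finset.sum_le_card_nsmul (Finset.range j) (fun i => 1 / (w - x (i + 1)))
        (1 / (w - x j)) fun i hi => one_div_le_one_div_of_le hj1
          (by linarith [hlow (i + 1) (Finset.mem_range.1 hi)])
      simpa using this
    have a2 : 1 / (w - x (j + 1)) = - (1 / (x (j + 1) - w)) := by
      rw [← neg_sub, one_div_neg_eq_neg_one_div]
    have a3 : ∑ i ∈ Finset.range d, 1 / (w - x (j + 1 + i + 1)) ≤ 0 :=
      Finset.sum_nonpos fun i _ => one_div_nonpos.2
        (by linarith [hhigh (j + 1 + i + 1) (by omega)])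
    linarith
  have hfin : 1 / (x (j + 1) - w) ≤ (j + 1) / (w - x j) := by
    rw [add_div, div_eq_mul_one_div (j : ℝ)]; linarith
  rw [div_le_div_iff₀ hj2 hj1] at hfin
  rw [le_div_iff₀ (by positivity)]
  linarith

/-- The case of distinct roots of `polar_monotone`. -/
lemma polar_strict (N : ℕ) (κ : ℝ) (hκ : 0 < κ) (hκ1 : κ ≤ 1) (x : ℕ → ℝ) (hx : StrictMono x) :
    ∃ b : ℕ → ℝ, (∀ j, x j ≤ b j ∧ b j ≤ (x j + (j + 1) * x (j + 1)) / (j + 2)) ∧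
      C κ * rootProd N (fun i => x (i + 1))
        + (X - C (x 0)) * derivative (rootProd N fun i => x (i + 1))
      = C (N + κ) * rootProd N b := by
  have H : ∀ j, ∃ w, (x j ≤ w ∧ w ≤ (x j + (j + 1) * x (j + 1)) / (j + 2)) ∧
      (j < N → w ∈ Set.Ioo (x j) (x (j + 1)) ∧ κ * (rootProd N fun i => x (i + 1)).eval w
      + (w - x 0) * (derivative (rootProd N fun i => x (i + 1))).eval w = 0) := by
    intro j
    by_cases hj : j < N
    · obtain ⟨w, hw, h0⟩ := polar_exists_root N κ hκ x hx j hj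
      exact ⟨w, ⟨hw.1.le, polar_root_le N κ hκ1 x hx j hj w hw h0⟩, fun _ => ⟨hw, h0⟩⟩
    · refine ⟨x j, ⟨le_rfl, ?_⟩, fun h => absurd h hj⟩
      rw [le_div_iff₀ (by positivity)]
      have := mul_le_mul_of_nonneg_left (hx (Nat.lt_succ_self j)).le
        (by positivity : (0 : ℝ) ≤ j + 1)
      simp only [Nat.succ_eq_add_one] at this
      linarith
  choose b hb1 hb2 using H
  refine ⟨b, hb1, polar_eq_of_roots N κ (x 0) _ b ?_ fun j hj => (hb2 j hj).2⟩
  have hlt : ∀ i k, i < k → k < N → b i < b k := fun i k hik hk =>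
    ((hb2 i (hik.trans hk)).1.2.trans_le (hx.monotone hik)).trans (hb2 k hk).1.1
  intro i hi k hk hik
  simp only [Finset.coe_range, Set.mem_Iio] at hi hk
  rcases lt_trichotomy i k with h | h | h
  · exact absurd hik (hlt i k h hk).ne
  · exact h
  · exact absurd hik (hlt k i h hi).ne.symm

/-- Real-rootedness of `κ Q + (X - x 0) Q'`, where `Q` has the roots `x 1 ≤ … ≤ x N`, together with
interlacing and a quantitative upper bound on its roots `b 0, …, b (N - 1)`. The inequalities are
asserted for all `j`, so that `b` is again a monotone sequence. -/
lemma polar_monotone (N : ℕ) (κ : ℝ) (hκ : 0 < κ) (hκ1 : κ ≤ 1) (x : ℕ → ℝ) (hx : Monotone x) :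
    ∃ b : ℕ → ℝ, (∀ j, x j ≤ b j ∧ b j ≤ (x j + (j + 1) * x (j + 1)) / (j + 2)) ∧
      C κ * rootProd N (fun i => x (i + 1))
        + (X - C (x 0)) * derivative (rootProd N fun i => x (i + 1))
      = C (N + κ) * rootProd N b := by
  -- the strictly increasing perturbations `x j + j / (t + 1)`
  let ε : ℕ → ℝ := fun t => 1 / ((t : ℝ) + 1)
  have hε0 : ∀ t, 0 < ε t := fun t => Nat.one_div_pos_of_nat
  have hε1 : ∀ t, ε t ≤ 1 := fun t => by
    simpa [ε] using Nat.one_div_le_one_div (α := ℝ) (Nat.zero_le t)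
  have hεlim : Filter.Tendsto ε Filter.atTop (nhds 0) := tendsto_one_div_add_atTop_nhds_zero_nat
  let y : ℕ → ℕ → ℝ := fun t j => x j + ε t * j
  have hy : ∀ t, StrictMono (y t) := fun t => hx.add_strictMono
    ((Nat.strictMono_cast (α := ℝ)).const_mul (hε0 t))
  have hylim : ∀ j, Filter.Tendsto (fun t => y t j) Filter.atTop (nhds (x j)) := fun j => by
    simpa using (hεlim.mul_const (j : ℝ)).const_add (x j)
  choose b hb1 hb2 using fun t => polar_strict N κ hκ hκ1 (y t) (hy t)
  have hK : IsCompact (Set.univ.pi fun j : ℕ => Set.Icc (x j) (x (j + 1) + (j + 1))) :=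
    isCompact_univ_pi fun j => isCompact_Icc
  have hbK : ∀ t, b t ∈ Set.univ.pi fun j : ℕ => Set.Icc (x j) (x (j + 1) + (j + 1)) := by
    intro t j _
    have hj0 : (0 : ℝ) ≤ j := Nat.cast_nonneg j
    constructor
    · exact le_trans (le_add_of_nonneg_right (mul_nonneg (hε0 t).le hj0)) (hb1 t j).1
    · refine (hb1 t j).2.trans ?_
      have h1 : y t j ≤ y t (j + 1) := (hy t).monotone (Nat.le_succ j)
      have h2 : y t (j + 1) ≤ x (j + 1) + (j + 1) := by
        have := mul_le_mul_of_nonneg_right (hε1 t) (by positivity : (0 : ℝ) ≤ j + 1)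
        simp only [y]; push_cast; linarith
      rw [div_le_iff₀ (by positivity)]
      nlinarith
  obtain ⟨c, -, φ, hφ, hc⟩ := hK.tendsto_subseq hbK
  have hc' : ∀ j, Filter.Tendsto (fun t => b (φ t) j) Filter.atTop (nhds (c j)) :=
    fun j => (tendsto_pi_nhds.1 hc) j
  have hy' : ∀ j, Filter.Tendsto (fun t => y (φ t) j) Filter.atTop (nhds (x j)) :=
    fun j => (hylim j).comp hφ.tendsto_atTop
  refine ⟨c, fun j => ⟨le_of_tendsto_of_tendsto' (hy' j) (hc' j) fun t => (hb1 (φ t) j).1,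
    le_of_tendsto_of_tendsto' (hc' j)
      (((hy' j).add ((hy' (j + 1)).const_mul _)).div_const _) fun t => (hb1 (φ t) j).2⟩, ?_⟩
  refine Polynomial.funext fun w => ?_
  simp only [eval_add, eval_mul, eval_sub, eval_C, eval_X, rootProd_eval,
    rootProd_derivative_eval]
  refine tendsto_nhds_unique (f := fun t => κ * ∏ i ∈ Finset.range N, (w - y (φ t) (i + 1))
    + (w - y (φ t) 0) * ∑ i ∈ Finset.range N, ∏ k ∈ (Finset.range N).erase i,
      (w - y (φ t) (k + 1))) (l := Filter.atTop) ?_ ?_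
  · exact ((tendsto_finsetProd _ fun i _ => (hy' (i + 1)).const_sub w).const_mul κ).add
      (((hy' 0).const_sub w).mul (tendsto_finsetSum _ fun i _ =>
        tendsto_finsetProd _ fun k _ => (hy' (k + 1)).const_sub w))
  · have : ∀ t, κ * ∏ i ∈ Finset.range N, (w - y (φ t) (i + 1))
        + (w - y (φ t) 0) * ∑ i ∈ Finset.range N, ∏ k ∈ (Finset.range N).erase i,
          (w - y (φ t) (k + 1)) = (N + κ) * ∏ i ∈ Finset.range N, (w - b (φ t) i) := by
      intro t
      have := congrArg (Polynomial.eval w) (hb2 (φ t))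
      simpa only [eval_add, eval_mul, eval_sub, eval_C, eval_X, rootProd_eval,
        rootProd_derivative_eval] using this
    simp only [this]
    exact (tendsto_finsetProd _ fun i _ => (hc' i).const_sub w).const_mul _

/-! ### Iterated derivatives of a polynomial in `X ^ m` -/

lemma derivative_X_pow_mul_expand (s m : ℕ) (hm : 1 ≤ m) (f : ℝ[X]) :
    derivative (X ^ (s + 1) * expand ℝ m f)
      = C (m : ℝ) * (X ^ s * expand ℝ m (C (((s + 1 : ℕ) : ℝ) / m) * f + X * derivative f)) := by
  have hm0 : (m : ℝ) ≠ 0 := by positivity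
  obtain ⟨l, rfl⟩ : ∃ l, m = l + 1 := ⟨m - 1, by omega⟩
  have hC : C (((l + 1 : ℕ) : ℝ)) * C (((s + 1 : ℕ) : ℝ) / ((l + 1 : ℕ) : ℝ))
      = C (((s + 1 : ℕ) : ℝ)) := by
    rw [← C_mul, mul_div_cancel₀ _ hm0]
  have hC' : ((l + 1 : ℕ) : ℝ[X]) = C (((l + 1 : ℕ) : ℝ)) := (C_eq_natCast _).symm
  simp only [derivative_mul, derivative_X_pow, derivative_expand, map_add, map_mul, expand_C,
    expand_X, Nat.add_sub_cancel, hC']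
  linear_combination -(X ^ s * expand ℝ (l + 1) f) * hC

/-- The factorization of the `(k + 1)`-st derivative for `k + 1 ≤ m`, with positive roots `b` in the
variable `X ^ m`. The sequence `A` bounds the initial roots and grows at least geometrically with
ratio `1 / β`; each derivative then gains a factor `(j + 1 + β) / (j + 2)` on the `j`-th root. -/
lemma iterate_derivative_chain (N m : ℕ) (hN : 1 ≤ N) (hm : 1 ≤ m) (x : ℕ → ℝ)
    (hx : Monotone x) (hpos : 0 < x 0) (k : ℕ) (hk : k + 1 ≤ m) :
    ∃ (K : ℝ) (b : ℕ → ℝ), Monotone b ∧ 0 < b 0 ∧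
      derivative^[k + 1] (expand ℝ m (rootProd (N + 1) x))
        = C K * (X ^ (m - (k + 1)) * expand ℝ m (rootProd N b)) ∧
      ∀ (β : ℝ) (A : ℕ → ℝ), 0 ≤ β → β ≤ 1 → (∀ j < N + 1, x j ≤ A j) →
        (∀ j < N, A j ≤ β * A (j + 1)) →
        ∀ j < N, b j ≤ (((j : ℝ) + 1 + β) / (j + 2)) ^ (k + 1) * A (j + 1) := by
  have hmono : ∀ y b : ℕ → ℝ, Monotone y →
      (∀ j : ℕ, y j ≤ b j ∧ b j ≤ (y j + (j + 1) * y (j + 1)) / (j + 2)) → Monotone b := by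
    intro y b hy hb
    refine monotone_nat_of_le_succ fun j => (hb j).2.trans (le_trans ?_ (hb (j + 1)).1)
    rw [div_le_iff₀ (by positivity)]
    linarith [hy (Nat.le_succ j)]
  induction k with
  | zero =>
    obtain ⟨b, hb, hpoly⟩ := polar_monotone N 1 one_pos le_rfl x hx
    refine ⟨m * (N + 1), b, hmono x b hx hb, hpos.trans_le (hb 0).1, ?_, ?_⟩
    · have hQ : derivative (rootProd (N + 1) x) = C ((N : ℝ) + 1) * rootProd N b := by
        rw [← hpoly]
        have : rootProd (N + 1) x = rootProd N (fun i => x (i + 1)) * (X - C (x 0)) :=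
          Finset.prod_range_succ' _ _
        rw [this, derivative_mul, derivative_X_sub_C, C_1]
        ring
      rw [zero_add, Function.iterate_one, derivative_expand, hQ, map_mul, expand_C, C_mul,
        ← C_eq_natCast]
      ring
    · intro β A hβ0 hβ1 hA hAβ j hj
      refine (hb j).2.trans ?_
      rw [zero_add, pow_one, div_mul_eq_mul_div]
      refine div_le_div_of_nonneg_right ?_ (by positivity)
      have h1 := (hA j (by omega)).trans (hAβ j hj)
      have h2 := mul_le_mul_of_nonneg_left (hA (j + 1) (by omega))
        (by positivity : (0 : ℝ) ≤ j + 1)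
      linarith
  | succ k ih =>
    obtain ⟨K, b, hbm, hb0, hder, hbound⟩ := ih (by omega)
    obtain ⟨s, hs⟩ : ∃ s, m - (k + 1) = s + 1 := ⟨m - (k + 1) - 1, by omega⟩
    have hm0 : (0 : ℝ) < m := by exact_mod_cast hm
    -- the factor `X` of `X * derivative _` corresponds to the additional lower node `0`
    let y : ℕ → ℝ := fun i => Nat.casesOn i 0 b
    have hy : Monotone y := by
      refine monotone_nat_of_le_succ fun j => ?_
      cases j with
      | zero => exact hb0.le
      | succ j => exact hbm (Nat.le_succ j)
    have hκ : 0 < ((s + 1 : ℕ) : ℝ) / m := by positivity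
    obtain ⟨c, hc, hpoly⟩ := polar_monotone N (((s + 1 : ℕ) : ℝ) / m) hκ
      ((div_le_one hm0).2 (by exact_mod_cast (by omega : s + 1 ≤ m))) y hy
    have hpoly' : C (((s + 1 : ℕ) : ℝ) / m) * rootProd N b + X * derivative (rootProd N b)
        = C (N + ((s + 1 : ℕ) : ℝ) / m) * rootProd N c := by
      have h0 : y 0 = 0 := rfl
      have hb' : (fun i => y (i + 1)) = b := rfl
      rw [h0, hb', C_0, sub_zero] at hpoly
      exact hpoly
    -- `0` is not a root, because `κ Q(0) ≠ 0`
    have hc0 : 0 < c 0 := by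
      refine lt_of_le_of_ne (hc 0).1 fun h => ?_
      change 0 = c 0 at h
      have := congrArg (Polynomial.eval 0) hpoly'
      simp only [eval_add, eval_mul, eval_C, eval_X, zero_mul, add_zero, rootProd_eval] at this
      rw [Finset.prod_eq_zero (f := fun i => 0 - c i) (Finset.mem_range.2 hN)
        (by rw [← h, sub_zero]), mul_zero] at this
      refine (mul_ne_zero hκ.ne' (Finset.prod_ne_zero_iff.2 fun i _ => ?_)) this
      have := hb0.trans_le (hbm (Nat.zero_le i))
      rw [zero_sub]
      exact (neg_lt_zero.2 this).ne
    refine ⟨K * (m * (N + ((s + 1 : ℕ) : ℝ) / m)), c, hmono y c hy hc, hc0, ?_, ?_⟩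
    · have hs' : m - (k + 1 + 1) = s := by omega
      rw [Function.iterate_succ_apply', hder, hs, hs', derivative_C_mul,
        derivative_X_pow_mul_expand s m hm, hpoly', map_mul, expand_C, C_mul, C_mul]
      ring
    · intro β A hβ0 hβ1 hA hAβ j hj
      have hApos : ∀ i < N + 1, 0 < A i := fun i hi =>
        (hpos.trans_le (hx (Nat.zero_le i))).trans_le (hA i hi)
      have hAj := hApos (j + 1) (by omega)
      set t : ℝ := ((j : ℝ) + 1 + β) / (j + 2) with ht
      have ht0 : 0 < t := by positivity
      have hlow : y j ≤ β * (t ^ (k + 1) * A (j + 1)) := by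
        cases j with
        | zero => exact mul_nonneg hβ0 (mul_pos (pow_pos ht0 _) hAj).le
        | succ i =>
          have h1 := hbound β A hβ0 hβ1 hA hAβ i (by omega)
          have hti : ((i : ℝ) + 1 + β) / (i + 2) ≤ t := by
            rw [ht, div_le_div_iff₀ (by positivity) (by positivity)]
            push_cast
            nlinarith
          calc b i ≤ (((i : ℝ) + 1 + β) / (i + 2)) ^ (k + 1) * A (i + 1) := h1
            _ ≤ t ^ (k + 1) * A (i + 1) := by
              have := hApos (i + 1) (by omega)
              gcongr
            _ ≤ t ^ (k + 1) * (β * A (i + 1 + 1)) := by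
              have := hAβ (i + 1) hj
              gcongr
            _ = _ := by ring
      have hhigh : y (j + 1) ≤ t ^ (k + 1) * A (j + 1) := hbound β A hβ0 hβ1 hA hAβ j hj
      have h2 := mul_le_mul_of_nonneg_left hhigh (by positivity : (0 : ℝ) ≤ j + 1)
      calc c j ≤ (y j + (j + 1) * y (j + 1)) / (j + 2) := (hc j).2
        _ ≤ ((j + 1 + β) * (t ^ (k + 1) * A (j + 1))) / (j + 2) := by
          refine div_le_div_of_nonneg_right ?_ (by positivity)
          linarith
        _ = t ^ (k + 1 + 1) * A (j + 1) := by
          rw [pow_succ (n := k + 1), mul_div_right_comm, ← ht]; ring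

/-! ### The statement for tuples of radii -/

lemma monotone_eq_of_prod_eq (N : ℕ) (u v : Fin N → ℝ) (hu : Monotone u) (hv : Monotone v)
    (h : ∏ i, (X - C (u i)) = ∏ i, (X - C (v i))) : u = v := by
  have key : ∀ w : Fin N → ℝ, (∏ i, (X - C (w i))).roots = (List.ofFn w : Multiset ℝ) := by
    intro w
    rw [← roots_multiset_prod_X_sub_C (List.ofFn w : Multiset ℝ), Multiset.map_coe,
      Multiset.prod_coe, List.map_ofFn, List.prod_ofFn]
    rfl
  have hp : (List.ofFn u : Multiset ℝ) = List.ofFn v := by rw [← key, ← key, h]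
  exact List.ofFn_injective ((Multiset.coe_eq_coe.1 hp).eq_of_sortedLE
    hu.sortedLE_ofFn hv.sortedLE_ofFn)

lemma expand_rootProd (N m : ℕ) (x : ℕ → ℝ) :
    expand ℝ m (rootProd N x) = ∏ i : Fin N, (X ^ m - C (x i)) := by
  simp [rootProd, Finset.prod_range]

lemma expand_rootProd_coeff (N m : ℕ) (hm : 1 ≤ m) (x : ℕ → ℝ) :
    (expand ℝ m (rootProd N x)).coeff (N * m) = 1 := by
  rw [coeff_expand_mul hm]
  have := (rootProd_monic N x).coeff_natDegree
  rwa [rootProd_natDegree] at this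

/-- The `m`-th derivative: the end of the chain `iterate_derivative_chain`, with the constant
identified by comparing leading coefficients. -/
lemma iterate_derivative_factor (N m : ℕ) (hN : 1 ≤ N) (hm : 1 ≤ m) (x : ℕ → ℝ)
    (hx : Monotone x) (hpos : 0 < x 0) :
    ∃ b : ℕ → ℝ, Monotone b ∧ 0 < b 0 ∧
      derivative^[m] (expand ℝ m (rootProd (N + 1) x))
        = C ((Nat.factorial ((N + 1) * m) : ℝ) / (Nat.factorial (N * m) : ℝ))
          * expand ℝ m (rootProd N b) ∧
      ∀ (β : ℝ) (A : ℕ → ℝ), 0 ≤ β → β ≤ 1 → (∀ j < N + 1, x j ≤ A j) →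
        (∀ j < N, A j ≤ β * A (j + 1)) →
        ∀ j < N, b j ≤ (((j : ℝ) + 1 + β) / (j + 2)) ^ m * A (j + 1) := by
  obtain ⟨k, rfl⟩ : ∃ k, m = k + 1 := ⟨m - 1, by omega⟩
  obtain ⟨K, b, h1, h2, h3, h4⟩ := iterate_derivative_chain N (k + 1) hN hm x hx hpos k le_rfl
  refine ⟨b, h1, h2, ?_, h4⟩
  rw [Nat.sub_self, pow_zero, one_mul] at h3
  rw [h3]
  congr 2
  have hcoeff := congrArg (fun p => Polynomial.coeff p (N * (k + 1))) h3
  simp only [coeff_iterate_derivative, coeff_C_mul, expand_rootProd_coeff N _ hm b, mul_one]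
    at hcoeff
  rw [← Nat.succ_mul, Nat.succ_eq_add_one, expand_rootProd_coeff (N + 1) _ hm x,
    nsmul_eq_mul, mul_one] at hcoeff
  rw [← hcoeff, eq_div_iff (by positivity)]
  have := Nat.factorial_mul_descFactorial (n := (N + 1) * (k + 1)) (k := k + 1)
    (Nat.le_mul_of_pos_left _ (Nat.succ_pos N))
  rw [show (N + 1) * (k + 1) - (k + 1) = N * (k + 1) by
    rw [Nat.succ_mul, Nat.add_sub_cancel]] at this
  rw [mul_comm]
  exact_mod_cast this

/-- The statement of `stmt8` for `n = N + 1`. -/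
theorem stmt8_aux (N m : ℕ) (hN : 1 ≤ N) (hm : 1 ≤ m)
    (rn : Fin (N + 1) → ℝ) (hrn : Monotone rn) (hrnpos : ∀ j, 0 < rn j) :
    (∃ R : Fin N → ℝ, Monotone R ∧ (∀ j, 0 < R j) ∧
      derivative^[m] (∏ j, (X ^ m - C (rn j ^ m)))
        = C ((Nat.factorial ((N + 1) * m) : ℝ) / (Nat.factorial (N * m) : ℝ)) *
            ∏ j, (X ^ m - C (R j ^ m)))
    ∧
    (∀ R : Fin N → ℝ, Monotone R → (∀ j, 0 < R j) →
      derivative^[m] (∏ j, (X ^ m - C (rn j ^ m)))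
        = C ((Nat.factorial ((N + 1) * m) : ℝ) / (Nat.factorial (N * m) : ℝ)) *
            ∏ j, (X ^ m - C (R j ^ m)) →
      ∀ r : Fin (N + 1) → ℝ, StrictMono r → (∀ j, 0 < r j) →
      ∀ α : ℝ,
        IsGreatest {x : ℝ | ∃ i j : Fin (N + 1), (i : ℕ) + 1 = (j : ℕ) ∧ x = r i / r j} α →
      (∀ j, rn j ≤ r j) →
      ∀ (j : Fin N) (j' : Fin (N + 1)), (j' : ℕ) = (j : ℕ) + 1 →
        R j ≤ min 1 (((j : ℕ) + 2 : ℝ) / ((((j : ℕ) + 3 : ℝ)) * (1 - α ^ m))) * r j') := by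
  have hm0 : m ≠ 0 := by omega
  -- prolong a tuple to a sequence, constant beyond its last index
  let e : ℕ → Fin (N + 1) := fun i => ⟨min i N, by omega⟩
  have he : ∀ i : Fin (N + 1), e i = i := fun i => Fin.ext (min_eq_left (by omega))
  have hemono : Monotone e := fun i k h => Fin.mk_le_mk.2 (min_le_min_right N h)
  obtain ⟨b, hbm, hb0, hpoly, hbound⟩ := iterate_derivative_factor N m hN hm
    (fun i => rn (e i) ^ m)
    (fun i k h => pow_le_pow_left₀ (hrnpos _).le (hrn (hemono h)) m) (pow_pos (hrnpos _) m)
  have hbpos : ∀ i, 0 < b i := fun i => hb0.trans_le (hbm (Nat.zero_le i))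
  simp only [expand_rootProd, he] at hpoly
  refine ⟨⟨fun j => b j ^ ((m : ℝ)⁻¹), ?_, fun j => Real.rpow_pos_of_pos (hbpos _) _, ?_⟩, ?_⟩
  · exact fun i k h => Real.rpow_le_rpow (hbpos _).le (hbm h) (by positivity)
  · rw [hpoly]
    congr 1
    refine Finset.prod_congr rfl fun j _ => ?_
    rw [Real.rpow_inv_natCast_pow (hbpos _).le hm0]
  · intro R hRm hRpos hR r hr hrpos α hα hle j j' hj'
    have hfac : ((Nat.factorial ((N + 1) * m) : ℝ) / (Nat.factorial (N * m) : ℝ)) ≠ 0 := by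
      positivity
    have hprod : ∏ j, (X ^ m - C (R j ^ m)) = ∏ j : Fin N, (X ^ m - C (b j)) :=
      mul_left_cancel₀ (C_ne_zero.2 hfac) (hR.symm.trans hpoly)
    have hRb : (fun j => R j ^ m) = fun j : Fin N => b j := by
      refine monotone_eq_of_prod_eq N _ _
        (fun i k h => pow_le_pow_left₀ (hRpos _).le (hRm h) m) (fun i k h => hbm h) ?_
      refine expand_injective hm ?_
      simpa using hprod
    obtain ⟨⟨i₀, j₀, hij, hα'⟩, hub⟩ := hα
    have hα0 : 0 < α := hα' ▸ div_pos (hrpos _) (hrpos _)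
    have hα1 : α < 1 := by
      rw [hα', div_lt_one (hrpos _)]
      exact hr (Fin.lt_def.2 (by omega))
    have hβ1 : α ^ m < 1 := pow_lt_one₀ hα0.le hα1 hm0
    have hβ0 : 0 < α ^ m := pow_pos hα0 m
    have hb := hbound (α ^ m) (fun i => r (e i) ^ m) hβ0.le hβ1.le
      (fun i _ => pow_le_pow_left₀ (hrnpos _).le (hle _) m)
      (fun i hi => by
        rw [← mul_pow]
        refine pow_le_pow_left₀ (hrpos _).le ?_ m
        rw [← div_le_iff₀ (hrpos _)]
        exact hub ⟨_, _, by simp only [e]; omega, rfl⟩) j j.2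
    have hej : e (j + 1) = j' := by rw [← hj', he]
    rw [hej, ← congrFun hRb j, ← mul_pow] at hb
    set β := α ^ m
    have hle' := le_of_pow_le_pow_left₀ hm0
      (mul_nonneg (by positivity) (hrpos _).le) hb
    refine hle'.trans (mul_le_mul_of_nonneg_right (le_min ?_ ?_) (hrpos _).le)
    · rw [div_le_one (by positivity)]; linarith
    · have h1β : 0 < 1 - β := by linarith
      rw [div_le_div_iff₀ (by positivity) (by positivity)]
      have hj0 : (0 : ℝ) ≤ (j : ℕ) := Nat.cast_nonneg _
      have : ((j : ℕ) + 1 + β : ℝ) * (1 - β) ≤ (j : ℕ) + 1 := by nlinarith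
      nlinarith

/-- For a nondecreasing sequence of positive radii `(rn_j)`, the `m`-th
derivative of `P_{n,m}(z) = Π_j (z^m - rn_j^m)` factors as
`((nm)!/((n-1)m)!) · Π_{j=1}^{n-1} (z^m - R_j^m)` for some nondecreasing positive
sequence `(R_j)`. Moreover, if `(r_j)` is strictly increasing positive with
`α = max_j r_j/r_{j+1}` and `rn_j ≤ r_j` for all `j`, then any such `R` satisfies
`R_j ≤ min(1, (j+1)/((j+2)(1-α^m)))·r_{j+1}` (indices counted from `1`). -/
theorem stmt8 (n m : ℕ) (hn : 2 ≤ n) (hm : 1 ≤ m)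
    (rn : Fin n → ℝ) (hrn : Monotone rn) (hrnpos : ∀ j, 0 < rn j) :
    (∃ R : Fin (n - 1) → ℝ, Monotone R ∧ (∀ j, 0 < R j) ∧
      derivative^[m] (∏ j, (X ^ m - C (rn j ^ m)))
        = C ((Nat.factorial (n * m) : ℝ) / (Nat.factorial ((n - 1) * m) : ℝ)) *
            ∏ j, (X ^ m - C (R j ^ m)))
    ∧
    (∀ R : Fin (n - 1) → ℝ, Monotone R → (∀ j, 0 < R j) →
      derivative^[m] (∏ j, (X ^ m - C (rn j ^ m)))
        = C ((Nat.factorial (n * m) : ℝ) / (Nat.factorial ((n - 1) * m) : ℝ)) *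
            ∏ j, (X ^ m - C (R j ^ m)) →
      ∀ r : Fin n → ℝ, StrictMono r → (∀ j, 0 < r j) →
      ∀ α : ℝ,
        IsGreatest {x : ℝ | ∃ i j : Fin n, (i : ℕ) + 1 = (j : ℕ) ∧ x = r i / r j} α →
      (∀ j, rn j ≤ r j) →
      ∀ (j : Fin (n - 1)) (j' : Fin n), (j' : ℕ) = (j : ℕ) + 1 →
        R j ≤ min 1 (((j : ℕ) + 2 : ℝ) / ((((j : ℕ) + 3 : ℝ)) * (1 - α ^ m))) * r j') := by
  obtain ⟨N, rfl⟩ : ∃ N, n = N + 1 := ⟨n - 1, by omega⟩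
  exact stmt8_aux N m (by omega) hm rn hrn hrnpos
end

section
/- Let n ≥ 2, m ≥ 1 be integers and let (r^{(n)}_j)_{1 ≤ j ≤ n} be a nondecreasing sequence of positive reals, and set P_{n,m}(z) = Π_{j=1}^n (z^m − (r^{(n)}_j)^m), so that P_{n,m}^{(m)}(z) = ((nm)!/((n−1)m)!) · Π_{j=1}^{n−1} (z^m − (R^{(n)}_j)^m) for a nondecreasing sequence (R^{(n)}_j)_{1 ≤ j ≤ n−1} of positive numbers. If (r_j)_{1 ≤ j ≤ n} is a strictly increasing sequence of positive reals with α = max_{1 ≤ j ≤ n−1} r_j/r_{j+1}, and if r^{(n)}_j ≥ r_j for all 1 ≤ j ≤ n, then for all 1 ≤ j ≤ n−1, R^{(n)}_j ≥ (1 − 1/max(1, j − 1 − (2 + log_−(m·log(α^{−1})))/(m·log(α^{−1})))) · r_{j+1}, where log_−(x) = max(0, −log x). -/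
/-!
Put `x = z ^ m` and `s_j = r_j ^ m`. Differentiating `z ^ e * U (z ^ m)` gives
`m z ^ (e - 1) ((θ + e / m) U) (z ^ m)` with `θ = x d/dx`, so the `m`-th derivative of `P_{n,m}`
amounts to one ordinary derivative in `x` followed by `m - 1` operators `θ + b` with `b > 0`. Both
kinds of step have the form `U ↦ (x - a) U' + b U` with `a` to the left of the roots `u_k` of `U`
(for the ordinary derivative `a` is the smallest root and `b = 1`; for the others `a = 0`). Rolle's
theorem for `(x - a) ^ b * U` produces new roots `v_i` interlacing with `a` and the old ones, and
the logarithmic derivative at `v_i` gives `i ≤ ∑_{k ≥ i} v_i / (u_k - v_i)` with indices from `0`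
(`interlace_step`).

If the `u_k` are bounded below by a sequence growing at least like `e ^ {λ k}`, where
`λ = m log α⁻¹`, the terms `k > i` of this sum contribute at most
`∑_{p ≥ 1} 1 / (e ^ {λ p} - 1) ≤ (2 + log₋ λ) / λ` (`sum_geom_bound`), so the term `k = i` has to be
large, which forces `v_i ≥ (1 - 1 / K_i) l_i` with `K_i = i - (2 + log₋ λ) / λ`
(`root_lower_bound`). Since `K_i` increases with `i`, the new lower bounds grow at least as fast as
the old ones and the step can be iterated. After `m` steps
`R_j ^ m ≥ (1 - 1 / K) ^ m r_{j+1} ^ m`.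

Iteration is carried out for simple roots (`strict_case`). Repeated radii are approximated from
above by distinct ones, which preserves all lower bounds, and compactness of the root vectors gives
the general case (`monotone_case`). Uniqueness of the ordered list of roots identifies the limit
with the given `R`.
-/

open Polynomial

/-- `log_-(x) = max(0, -log x)`. -/
noncomputable def logMinus (x : ℝ) : ℝ := max 0 (-Real.log x)

/-! ### Series estimate and lower bound for one root -/

/-- The partial sums of `∑_{p ≥ 1} 1 / (e ^ {λ p} - 1)`: the first term is at most `1 / λ`, and the
others are dominated by a telescoping logarithm. -/
lemma sum_geom_bound (lam : ℝ) (hlam : 0 < lam) (N : ℕ) :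
    ∑ p ∈ Finset.range N, 1 / (Real.exp (lam * (p + 1)) - 1) ≤ (2 + logMinus lam) / lam := by
  have hq : ∀ p : ℕ, 0 < 1 - Real.exp (-(lam * (p + 1))) := by
    intro p
    have : Real.exp (-(lam * (p + 1))) < 1 := by
      rw [Real.exp_lt_one_iff]
      have : 0 < lam * (p + 1) := by positivity
      linarith
    linarith
  have hE : ∀ p : ℕ, 0 < Real.exp (lam * (p + 1)) - 1 := by
    intro p
    have : 0 < lam * (p + 1) := by positivity
    linarith [Real.add_one_lt_exp this.ne']
  -- Telescoping: `F p = log (1 - e^{-lam (p + 1)}) / lam` has increments dominating the summands.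
  have key : ∀ M : ℕ, ∑ p ∈ Finset.range (M + 1), 1 / (Real.exp (lam * (p + 1)) - 1) ≤
      (1 + Real.log (1 - Real.exp (-(lam * (M + 1)))) - Real.log (1 - Real.exp (-lam))) / lam := by
    intro M
    induction M with
    | zero =>
      have h1 : lam ≤ Real.exp lam - 1 := by linarith [Real.add_one_le_exp lam]
      simpa using inv_anti₀ hlam h1
    | succ M ih =>
      rw [Finset.sum_range_succ]
      have hlog := Real.one_sub_inv_le_log_of_pos
        (div_pos (hq (M + 1)) (hq M))
      rw [Real.log_div (hq (M + 1)).ne' (hq M).ne', inv_div] at hlog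
      have h2 : lam / (Real.exp (lam * ((M + 1 : ℕ) + 1)) - 1) ≤
          1 - (1 - Real.exp (-(lam * (M + 1)))) / (1 - Real.exp (-(lam * ((M + 1 : ℕ) + 1)))) := by
        have hx := hE (M + 1)
        have hy := hq (M + 1)
        have e1 : Real.exp (-(lam * ((M + 1 : ℕ) + 1))) =
            (Real.exp (lam * ((M + 1 : ℕ) + 1)))⁻¹ := Real.exp_neg _
        have e2 : Real.exp (-(lam * (M + 1))) =
            Real.exp lam * (Real.exp (lam * ((M + 1 : ℕ) + 1)))⁻¹ := by
          rw [← Real.exp_neg, ← Real.exp_add]; congr 1; push_cast; ring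
        have h1 : lam ≤ Real.exp lam - 1 := by linarith [Real.add_one_le_exp lam]
        rw [e1] at hy
        rw [e1, e2]
        set E := Real.exp (lam * ((M + 1 : ℕ) + 1)) with hEdef
        have hEpos : 0 < E := Real.exp_pos _
        have : 1 - (1 - Real.exp lam * E⁻¹) / (1 - E⁻¹) = (Real.exp lam - 1) / (E - 1) := by
          have : E - 1 ≠ 0 := hx.ne'
          have h3 : 1 - E⁻¹ = (E - 1) / E := by field_simp
          rw [h3]
          field_simp
          ring
        rw [this]
        gcongr
      have h3 : 1 / (Real.exp (lam * ((M + 1 : ℕ) + 1)) - 1) =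
          (lam / (Real.exp (lam * ((M + 1 : ℕ) + 1)) - 1)) / lam := by
        field_simp
      rw [h3]
      calc _ ≤ (1 + Real.log (1 - Real.exp (-(lam * (M + 1)))) - Real.log (1 - Real.exp (-lam))) / lam
            + (Real.log (1 - Real.exp (-(lam * ((M + 1 : ℕ) + 1))))
              - Real.log (1 - Real.exp (-(lam * (M + 1))))) / lam := by
              apply add_le_add ih
              gcongr
              linarith
        _ = _ := by ring
  have hlast : -Real.log (1 - Real.exp (-lam)) ≤ 1 + logMinus lam := by
    unfold logMinus
    rcases le_total 1 lam with h | h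
    · have h1 : Real.exp (-1) ≤ 1 - Real.exp (-lam) := by
        have h2 : Real.exp (-lam) ≤ Real.exp (-1) := Real.exp_le_exp.2 (by linarith)
        have h3 : Real.exp (-1) ≤ 1 / 2 := by
          rw [Real.exp_neg, one_div]
          exact inv_anti₀ (by norm_num) (by linarith [Real.add_one_le_exp (1 : ℝ)])
        linarith
      have := Real.log_le_log (Real.exp_pos _) h1
      rw [Real.log_exp] at this
      linarith [le_max_left 0 (-Real.log lam)]
    · have h1 : lam * Real.exp (-lam) ≤ 1 - Real.exp (-lam) := by
        have h2 := Real.add_one_le_exp lam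
        have h3 : Real.exp lam * Real.exp (-lam) = 1 := by rw [← Real.exp_add]; simp
        nlinarith [Real.exp_pos (-lam)]
      have := Real.log_le_log (by positivity) h1
      rw [Real.log_mul hlam.ne' (Real.exp_pos _).ne', Real.log_exp] at this
      linarith [le_max_right 0 (-Real.log lam)]
  have hL : 0 ≤ logMinus lam := le_max_left _ _
  rcases N with _ | M
  · simp only [Finset.range_zero, Finset.sum_empty]
    positivity
  · refine (key M).trans ?_
    gcongr
    have := Real.log_nonpos (hq M).le (by linarith [Real.exp_pos (-(lam * (M + 1)))])
    linarith

/-- If `v` were below `l (1 - 1 / K)`, the `k = i` term of the sum would be at most `K - 1` and the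
remaining ones at most `(2 + log₋ λ) / λ` in total, contradicting `hsum`. -/
lemma root_lower_bound {d : ℕ} (u : Fin d → ℝ) (i : Fin d) (v l lam K : ℝ) (hlam : 0 < lam)
    (hK1 : 1 < K) (hK : K + (2 + logMinus lam) / lam ≤ i) (hl : 0 < l) (hv : 0 < v)
    (hu : ∀ k, i ≤ k → l * Real.exp (lam * ((k : ℝ) - i)) ≤ u k)
    (hsum : (i : ℝ) ≤ ∑ k ∈ Finset.Ici i, v / (u k - v)) : l * (1 - 1 / K) ≤ v := by
  by_contra hcon
  push Not at hcon
  have hK0 : 0 < K := by linarith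
  have hvl : v < l := by
    have : 0 < 1 / K := by positivity
    nlinarith
  have hi : v / (u i - v) ≤ K - 1 := by
    have h1 := hu i le_rfl
    simp only [sub_self, mul_zero, Real.exp_zero, mul_one] at h1
    rw [div_le_iff₀ (by linarith)]
    have h2 : v * K < l * (K - 1) := by
      have : l * (1 - 1 / K) * K = l * (K - 1) := by field_simp
      nlinarith
    nlinarith
  have hrest : ∑ k ∈ Finset.Ioi i, v / (u k - v) ≤ (2 + logMinus lam) / lam := by
    refine le_trans ?_ (sum_geom_bound lam hlam d)
    have h1 : ∑ k ∈ Finset.Ioi i, v / (u k - v) ≤ ∑ k ∈ Finset.Ioi i,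
        1 / (Real.exp (lam * ((((k : ℕ) - (i : ℕ) - 1 : ℕ) : ℝ) + 1)) - 1) := by
      apply Finset.sum_le_sum
      intro k hk
      rw [Finset.mem_Ioi] at hk
      have hk' : (i : ℕ) < k := hk
      have hcast : (((k : ℕ) - (i : ℕ) - 1 : ℕ) : ℝ) + 1 = (k : ℝ) - i := by
        rw [Nat.sub_sub, Nat.cast_sub (by omega)]; push_cast; ring
      rw [hcast]
      have hpos : 0 < lam * ((k : ℝ) - i) := by
        have : (i : ℝ) < k := by exact_mod_cast hk'
        exact mul_pos hlam (by linarith)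
      have hE := Real.add_one_lt_exp hpos.ne'
      have hk2 := hu k hk.le
      set E := Real.exp (lam * ((k : ℝ) - i))
      have hE1 : 0 < E - 1 := by linarith
      have h3 : v * (E - 1) ≤ u k - v := by nlinarith
      rw [div_le_div_iff₀ (lt_of_lt_of_le (mul_pos hv hE1) h3) hE1]
      linarith
    refine h1.trans ?_
    rw [← Finset.sum_image (s := Finset.Ioi i) (g := fun k : Fin d => (k : ℕ) - (i : ℕ) - 1)
      (f := fun p : ℕ => 1 / (Real.exp (lam * ((p : ℝ) + 1)) - 1))]
    · apply Finset.sum_le_sum_of_subset_of_nonneg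
      · intro p hp
        simp only [Finset.mem_image, Finset.mem_Ioi] at hp
        obtain ⟨k, hk, rfl⟩ := hp
        have := k.2
        simp only [Finset.mem_range]
        omega
      · intro p _ _
        have : 0 < lam * ((p : ℝ) + 1) := by positivity
        have := Real.add_one_lt_exp this.ne'
        apply div_nonneg zero_le_one
        linarith
    · intro a ha b hb hab
      simp only [Finset.coe_Ioi, Set.mem_Ioi, Fin.lt_def] at ha hb
      ext
      simp only at hab
      omega
  rw [← Finset.Ioi_insert, Finset.sum_insert (by simp)] at hsum
  linarith

/-! ### Interlacing of roots for one step -/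

lemma eval_derivative_prod_X_sub_C {d : ℕ} (u : Fin d → ℝ) (x : ℝ) (hx : ∀ i, x ≠ u i) :
    eval x (derivative (∏ i, (X - C (u i)))) =
      eval x (∏ i, (X - C (u i))) * ∑ i, 1 / (x - u i) := by
  rw [derivative_prod_finset, eval_finsetSum, Finset.mul_sum]
  refine Finset.sum_congr rfl fun i _ => ?_
  have : x - u i ≠ 0 := sub_ne_zero.2 (hx i)
  rw [← Finset.mul_prod_erase _ _ (Finset.mem_univ i)]
  simp
  field_simp

lemma eq_prod_of_roots {d : ℕ} (g : ℝ[X]) (c : ℝ) (v : Fin d → ℝ) (hv : Function.Injective v)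
    (hdeg : ∀ k, d < k → g.coeff k = 0) (hc : g.coeff d = c) (hroot : ∀ i, eval (v i) g = 0) :
    g = C c * ∏ i, (X - C (v i)) := by
  have hmon : (∏ i, (X - C (v i))).Monic := monic_prod_X_sub_C _ _
  have hnat : (∏ i, (X - C (v i))).natDegree = d := by simp
  apply eq_of_degree_sub_lt_of_eval_index_eq (Finset.univ) (v := v) hv.injOn
  · rw [Finset.card_univ, Fintype.card_fin, degree_lt_iff_coeff_zero]
    intro k hk
    rw [coeff_sub, coeff_C_mul]
    rcases hk.eq_or_lt with rfl | hk
    · have : (∏ i, (X - C (v i))).coeff d = 1 := by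
        have h := hmon.coeff_natDegree
        rwa [hnat] at h
      rw [this, hc]; ring
    · rw [hdeg k hk, coeff_eq_zero_of_natDegree_lt (by omega)]; ring
  · intro i _
    rw [hroot i, eval_mul, eval_prod, Finset.prod_eq_zero (Finset.mem_univ i) (by simp), mul_zero]

/-- The degree bound and the coefficient of `x ^ d` needed to recover `(x - a) f' + b f` from its roots. -/
lemma coeff_step {d : ℕ} (a b : ℝ) (f : ℝ[X]) (hf : f.Monic) (hd : f.natDegree = d) :
    (∀ k, d < k → ((X - C a) * derivative f + C b * f).coeff k = 0) ∧
    ((X - C a) * derivative f + C b * f).coeff d = d + b := by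
  have hz : ∀ k, d < k → f.coeff k = 0 := fun k hk => coeff_eq_zero_of_natDegree_lt (by omega)
  have hX : ∀ k, (X * derivative f).coeff k = k * f.coeff k := by
    intro k
    rcases k with _ | k
    · simp
    · rw [coeff_X_mul, coeff_derivative]; push_cast; ring
  have h1 : f.coeff d = 1 := by rw [← hd]; exact hf
  constructor
  · intro k hk
    rw [sub_mul, coeff_add, coeff_sub, hX, coeff_C_mul, coeff_C_mul, coeff_derivative, hz k hk,
      hz (k + 1) (by omega)]
    ring
  · rw [sub_mul, coeff_add, coeff_sub, hX, coeff_C_mul, coeff_C_mul, coeff_derivative, h1,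
      hz (d + 1) (by omega)]
    ring

/-- The operator `U ↦ (x - a) U' + b U` sends a polynomial with simple roots to the right of `a` to
one of the same kind, with interlacing roots; the final inequality comes from the logarithmic
derivative of `(x - a) ^ b * U` at the new roots. -/
lemma interlace_step {d : ℕ} (a b : ℝ) (ha : 0 ≤ a) (hb : 0 < b) (u : Fin d → ℝ)
    (hu : StrictMono u) (hau : ∀ i, a < u i) :
    ∃ v : Fin d → ℝ, StrictMono v ∧ (∀ i, a < v i) ∧ (∀ i, v i < u i) ∧
      (X - C a) * derivative (∏ i, (X - C (u i))) + C b * ∏ i, (X - C (u i)) =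
        C (d + b) * ∏ i, (X - C (v i)) ∧
      ∀ i : Fin d, ((i : ℕ) : ℝ) ≤ ∑ k ∈ Finset.Ici i, v i / (u k - v i) := by
  set f : ℝ[X] := ∏ i, (X - C (u i)) with hf
  have hroot : ∀ i, eval (u i) f = 0 := fun i => by
    rw [hf, eval_prod, Finset.prod_eq_zero (Finset.mem_univ i) (by simp)]
  have hex : ∀ i, ∃ c, a < c ∧ c < u i ∧ (∀ k, k < i → u k < c) ∧
      eval c ((X - C a) * derivative f + C b * f) = 0 := by
    intro i
    -- The left endpoint for Rolle's theorem: the previous zero of `(x - a)^b f(x)`.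
    obtain ⟨L, haL, hLu, hL, hL0⟩ : ∃ L, a ≤ L ∧ L < u i ∧ (∀ k, k < i → u k ≤ L) ∧
        (L - a) ^ b * eval L f = 0 := by
      rcases Nat.eq_zero_or_pos (i : ℕ) with h0 | h0
      · refine ⟨a, le_rfl, hau i, fun k hk => ?_, ?_⟩
        · have : (k : ℕ) < i := hk
          omega
        · rw [sub_self, Real.zero_rpow hb.ne', zero_mul]
      · refine ⟨u ⟨i - 1, by omega⟩, (hau _).le, hu ?_, fun k hk => hu.monotone ?_, ?_⟩
        · rw [Fin.lt_def]; simp only; omega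
        · rw [Fin.lt_def] at hk; rw [Fin.le_def]; simp only; omega
        · rw [hroot, mul_zero]
    obtain ⟨c, ⟨hc1, hc2⟩, hc⟩ := exists_hasDerivAt_eq_zero (f := fun x => (x - a) ^ b * eval x f)
      (f' := fun x => (1 * b * (x - a) ^ (b - 1)) * eval x f + (x - a) ^ b * eval x (derivative f))
      hLu
      (by
        apply ContinuousOn.mul
        · exact ContinuousOn.rpow_const (by fun_prop) (fun x _ => Or.inr hb.le)
        · exact f.continuous.continuousOn)
      (by simp only [hL0, hroot, mul_zero])
      (by
        intro x hx
        have hxa : x - a ≠ 0 := by have := hx.1; intro h; linarith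
        exact (((hasDerivAt_id x).sub_const a).rpow_const (Or.inl hxa)).mul (f.hasDerivAt x))
    refine ⟨c, by linarith, hc2, fun k hk => (hL k hk).trans_lt hc1, ?_⟩
    have hca : 0 < c - a := by linarith
    have h1 : (c - a) ^ b = (c - a) ^ (b - 1) * (c - a) := by
      rw [← Real.rpow_add_one hca.ne']; ring_nf
    have h2 : (c - a) ^ (b - 1) * ((c - a) * eval c (derivative f) + b * eval c f) = 0 := by
      rw [h1] at hc
      linarith
    rcases mul_eq_zero.1 h2 with h | h
    · exact absurd h (Real.rpow_pos_of_pos hca _).ne'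
    · simpa using h
  choose v hav hvu hlt hv0 using hex
  have hvm : StrictMono v := fun i k hik => (hvu i).trans (hlt k i hik)
  have hcoef := coeff_step a b f (monic_prod_X_sub_C _ _) (d := d) (by simp [hf])
  refine ⟨v, hvm, hav, hvu, eq_prod_of_roots _ _ v hvm.injective hcoef.1 hcoef.2 hv0, ?_⟩
  intro i
  have hvi : 0 < v i := ha.trans_lt (hav i)
  have hne : ∀ k, v i ≠ u k := by
    intro k
    rcases lt_or_ge k i with h | h
    · exact (hlt i k h).ne'
    · exact ((hvu i).trans_le (hu.monotone h)).ne
  have hfne : eval (v i) f ≠ 0 := by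
    rw [hf, eval_prod, Finset.prod_ne_zero_iff]
    intro k _
    simpa using sub_ne_zero.2 (hne k)
  have heq := hv0 i
  simp only [eval_add, eval_mul, eval_sub, eval_X, eval_C] at heq
  rw [hf, eval_derivative_prod_X_sub_C u (v i) hne, ← hf] at heq
  have h1 : (v i - a) * ∑ k, 1 / (v i - u k) + b = 0 := by
    have : eval (v i) f * ((v i - a) * ∑ k, 1 / (v i - u k) + b) = 0 := by linarith
    exact (mul_eq_zero.1 this).resolve_left hfne
  have hva : 0 < v i - a := by linarith [hav i]
  have h2 : ∑ k, 1 / (v i - u k) ≤ 0 := by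
    by_contra h
    push Not at h
    have := mul_pos hva h
    linarith
  have h3 : ∑ k, v i / (v i - u k) ≤ 0 := by
    have : ∑ k, v i / (v i - u k) = v i * ∑ k, 1 / (v i - u k) := by
      rw [Finset.mul_sum]; simp [div_eq_mul_inv]
    rw [this]
    exact mul_nonpos_of_nonneg_of_nonpos hvi.le h2
  have h4 : ∑ k, v i / (v i - u k) =
      ∑ k ∈ Finset.Iio i, v i / (v i - u k) + ∑ k ∈ Finset.Ici i, v i / (v i - u k) := by
    rw [← Finset.sum_union]
    · congr 1
      ext k
      simp [lt_or_ge]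
    · rw [Finset.disjoint_left]
      intro k hk hk'
      simp at hk hk'
      exact absurd hk (not_lt.2 hk')
  have h5 : (i : ℝ) ≤ ∑ k ∈ Finset.Iio i, v i / (v i - u k) := by
    have : ∑ k ∈ Finset.Iio i, (1 : ℝ) = i := by simp
    rw [← this]
    apply Finset.sum_le_sum
    intro k hk
    rw [Finset.mem_Iio] at hk
    have := hlt i k hk
    rw [le_div_iff₀ (by linarith)]
    linarith [ha.trans_lt (hau k)]
  have h6 : ∑ k ∈ Finset.Ici i, v i / (u k - v i) = -∑ k ∈ Finset.Ici i, v i / (v i - u k) := by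
    rw [← Finset.sum_neg_distrib]
    refine Finset.sum_congr rfl fun k _ => ?_
    rw [← div_neg, neg_sub]
  linarith

/-! ### Iteration for simple roots -/

/-- The index-dependent quantity `K_i = i - (2 + log₋ λ) / λ` (with `i` counted from `0`);
one differentiation costs at most a factor `1 - 1 / K_i` on the `i`-th root in the variable `x = z ^ m`. -/
noncomputable def lossIndex (lam : ℝ) (i : ℕ) : ℝ := i - (2 + logMinus lam) / lam

lemma loss_mono {lam : ℝ} {i k : ℕ} (hi : 1 < lossIndex lam i) (hik : i ≤ k) :
    1 < lossIndex lam k ∧ 0 < 1 - 1 / lossIndex lam i ∧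
      1 - 1 / lossIndex lam i ≤ 1 - 1 / lossIndex lam k := by
  have h : lossIndex lam i ≤ lossIndex lam k := by
    unfold lossIndex
    have : (i : ℝ) ≤ k := by exact_mod_cast hik
    linarith
  refine ⟨hi.trans_le h, ?_, ?_⟩
  · rw [sub_pos, div_lt_one (by linarith)]; exact hi
  · have := one_div_le_one_div_of_le (by linarith) h
    linarith

/-- One step multiplies the lower bound of the `i`-th root by `1 - 1 / K_i`. -/
lemma bound_step {d : ℕ} (lam : ℝ) (hlam : 0 < lam) (l : Fin d → ℝ) (hl : ∀ i, 0 < l i)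
    (hgeom : ∀ i k : Fin d, i ≤ k → l i * Real.exp (lam * ((k : ℝ) - i)) ≤ l k) (t : ℕ)
    (u v : Fin d → ℝ) (hv : ∀ i, 0 < v i)
    (hsum : ∀ i : Fin d, ((i : ℕ) : ℝ) ≤ ∑ k ∈ Finset.Ici i, v i / (u k - v i))
    (hu : ∀ i : Fin d, 1 < lossIndex lam i → l i * (1 - 1 / lossIndex lam i) ^ t ≤ u i)
    (i : Fin d) (hi : 1 < lossIndex lam i) :
    l i * (1 - 1 / lossIndex lam i) ^ (t + 1) ≤ v i := by
  have hq := (loss_mono hi le_rfl).2.1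
  rw [pow_succ, ← mul_assoc]
  refine root_lower_bound u i (v i) _ lam _ hlam hi (by unfold lossIndex; linarith)
    (mul_pos (hl i) (pow_pos hq t)) (hv i) ?_ (hsum i)
  intro k hik
  obtain ⟨hk1, -, hk3⟩ := loss_mono hi (Fin.le_def.1 hik)
  refine le_trans ?_ (hu k hk1)
  calc l i * (1 - 1 / lossIndex lam i) ^ t * Real.exp (lam * ((k : ℝ) - i))
      = (l i * Real.exp (lam * ((k : ℝ) - i))) * (1 - 1 / lossIndex lam i) ^ t := by ring
    _ ≤ l k * (1 - 1 / lossIndex lam k) ^ t := by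
      have := hl k
      have := hgeom i k hik
      gcongr

lemma prod_X_pow_eq_expand {d : ℕ} (m : ℕ) (s : Fin d → ℝ) :
    ∏ i, (X ^ m - C (s i)) = expand ℝ m (∏ i, (X - C (s i))) := by
  rw [map_prod]
  simp

/-- The first `t + 1` derivatives when the roots `s` in `x = z ^ m` are simple. The constant `c` does
not depend on `s`, which is what allows passing to the limit in `s`. -/
lemma strict_case (d m : ℕ) (hm : 1 ≤ m) (lam : ℝ) (hlam : 0 < lam) (l : Fin d → ℝ)
    (hl : ∀ i, 0 < l i)
    (hgeom : ∀ i k : Fin d, i ≤ k → l i * Real.exp (lam * ((k : ℝ) - i)) ≤ l k) (t : ℕ) (ht : t < m) :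
    ∃ c : ℝ, ∀ s : Fin (d + 1) → ℝ, StrictMono s → (∀ i, 0 < s i) → (∀ i, l i ≤ s i.succ) →
      ∃ v : Fin d → ℝ, StrictMono v ∧ (∀ i, 0 < v i) ∧ (∀ i, v i ≤ s i.succ) ∧
        derivative^[t + 1] (∏ i, (X ^ m - C (s i))) =
          C c * (X ^ (m - (t + 1)) * ∏ i, (X ^ m - C (v i))) ∧
        ∀ i : Fin d, 1 < lossIndex lam i →
          l i * (1 - 1 / lossIndex lam i) ^ (t + 1) ≤ v i := by
  induction t with
  | zero =>
    refine ⟨m * (d + 1), fun s hs hspos hls => ?_⟩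
    obtain ⟨v, hvm, hav, hvs, hpoly, hsum⟩ := interlace_step (s 0) 1 (hspos 0).le one_pos
      (fun i : Fin d => s i.succ) (fun i k h => hs (Fin.succ_lt_succ_iff.2 h))
      (fun i => hs (Fin.succ_pos i))
    have hvpos : ∀ i, 0 < v i := fun i => (hspos 0).trans (hav i)
    refine ⟨v, hvm, hvpos, fun i => (hvs i).le, ?_, ?_⟩
    · have hQ : derivative (∏ i, (X - C (s i))) = C (d + 1 : ℝ) * ∏ i, (X - C (v i)) := by
        rw [← hpoly, Fin.prod_univ_succ, derivative_mul]
        simp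
        ring
      rw [prod_X_pow_eq_expand, prod_X_pow_eq_expand, zero_add, Function.iterate_one,
        derivative_expand, hQ]
      simp
      ring
    · refine bound_step lam hlam l hl hgeom 0 _ v hvpos hsum (fun i _ => ?_)
      simpa using hls i
  | succ t ih =>
    obtain ⟨c, hc⟩ := ih (by omega)
    have hmpos : (0 : ℝ) < m := by exact_mod_cast hm
    have hb : (0 : ℝ) < ((m - (t + 1) : ℕ) : ℝ) / m := by
      have : 0 < m - (t + 1) := by omega
      have : (0 : ℝ) < ((m - (t + 1) : ℕ) : ℝ) := by exact_mod_cast this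
      positivity
    refine ⟨c * m * (d + ((m - (t + 1) : ℕ) : ℝ) / m), fun s hs hspos hls => ?_⟩
    obtain ⟨u, hum, hupos, hus, hup, hub⟩ := hc s hs hspos hls
    obtain ⟨v, hvm, hav, hvs, hpoly, hsum⟩ := interlace_step 0 _ le_rfl hb u hum hupos
    refine ⟨v, hvm, hav, fun i => (hvs i).le.trans (hus i), ?_, ?_⟩
    · rw [Function.iterate_succ_apply', hup]
      have hexp := congrArg (expand ℝ m) hpoly
      rw [prod_X_pow_eq_expand, prod_X_pow_eq_expand]
      set f : ℝ[X] := ∏ i, (X - C (u i))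
      set g : ℝ[X] := ∏ i, (X - C (v i))
      simp only [map_add, map_mul, expand_X, expand_C, map_zero, sub_zero] at hexp
      obtain ⟨e, he⟩ : ∃ e, m - (t + 1) = e + 1 := ⟨m - (t + 1) - 1, by omega⟩
      have he2 : m - (t + 1 + 1) = e := by omega
      have hmX : (X : ℝ[X]) ^ m = X * X ^ (m - 1) := by
        rw [← pow_succ', Nat.sub_add_cancel hm]
      rw [he] at hexp ⊢
      rw [he2]
      have hcm : (C (m : ℝ) : ℝ[X]) * C (((e + 1 : ℕ) : ℝ) / m) = C ((e + 1 : ℕ) : ℝ) := by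
        rw [← C_mul, mul_div_cancel₀ _ hmpos.ne']
      calc derivative (C c * (X ^ (e + 1) * expand ℝ m f))
          = C c * (X ^ e * (C ((e + 1 : ℕ) : ℝ) * expand ℝ m f
              + C (m : ℝ) * (X ^ m * expand ℝ m (derivative f)))) := by
            rw [derivative_C_mul, derivative_mul, derivative_X_pow, derivative_expand, hmX]
            simp only [Nat.add_sub_cancel, map_natCast]
            ring
        _ = C c * (X ^ e * (C (m : ℝ) * (X ^ m * expand ℝ m (derivative f)
              + C (((e + 1 : ℕ) : ℝ) / m) * expand ℝ m f))) := by
            rw [← hcm]; ring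
        _ = _ := by
            rw [hexp]
            simp only [C_mul, C_add]
            ring
    · exact bound_step lam hlam l hl hgeom (t + 1) u v hav hsum hub

/-! ### Repeated roots by approximation -/

lemma continuous_coeff_prod {d : ℕ} (m k : ℕ) :
    Continuous fun s : Fin d → ℝ => (∏ i, (X ^ m - C (s i))).coeff k := by
  have : ∀ (S : Finset (Fin d)) (k : ℕ),
      Continuous fun s : Fin d → ℝ => (∏ i ∈ S, (X ^ m - C (s i))).coeff k := by
    classical
    intro S
    induction S using Finset.induction_on with
    | empty => intro k; simpa using continuous_const
    | insert a S ha ih =>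
      intro k
      simp only [Finset.prod_insert ha, sub_mul, coeff_sub, coeff_C_mul, coeff_X_pow_mul']
      refine Continuous.sub ?_ ((continuous_apply a).mul (ih k))
      split_ifs
      · exact ih _
      · exact continuous_const
  exact this _ k

lemma monotone_eq_of_prod_eq_s9 {d : ℕ} (f g : Fin d → ℝ) (hf : Monotone f) (hg : Monotone g)
    (h : ∏ i, (X - C (f i)) = ∏ i, (X - C (g i))) : f = g := by
  have key : ∀ f : Fin d → ℝ, (∏ i, (X - C (f i))).roots = (List.ofFn f : Multiset ℝ) := by
    intro f
    have : ∏ i, (X - C (f i)) = (((List.ofFn f : Multiset ℝ)).map fun a => X - C a).prod := by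
      rw [Multiset.map_coe, Multiset.prod_coe, List.map_ofFn, List.prod_ofFn]
      rfl
    rw [this, roots_multiset_prod_X_sub_C]
  have hp := key f
  rw [h, key g, Multiset.coe_eq_coe] at hp
  exact List.ofFn_injective (hp.symm.eq_of_pairwise' hf.sortedLE_ofFn.pairwise
    hg.sortedLE_ofFn.pairwise)

/-- The case of possibly repeated roots, by approximating `s` from above by strictly increasing
sequences and extracting a convergent subsequence of the root vectors. -/
lemma monotone_case (d m : ℕ) (hm : 1 ≤ m) (lam : ℝ) (hlam : 0 < lam) (l : Fin d → ℝ)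
    (hl : ∀ i, 0 < l i)
    (hgeom : ∀ i k : Fin d, i ≤ k → l i * Real.exp (lam * ((k : ℝ) - i)) ≤ l k)
    (s : Fin (d + 1) → ℝ) (hs : Monotone s) (hspos : ∀ i, 0 < s i) (hls : ∀ i, l i ≤ s i.succ) :
    ∃ (c : ℝ) (v : Fin d → ℝ), Monotone v ∧
        derivative^[m] (∏ i, (X ^ m - C (s i))) = C c * ∏ i, (X ^ m - C (v i)) ∧
        ∀ i : Fin d, 1 < lossIndex lam i → l i * (1 - 1 / lossIndex lam i) ^ m ≤ v i := by
  obtain ⟨c, hc⟩ := strict_case d m hm lam hlam l hl hgeom (m - 1) (by omega)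
  rw [Nat.sub_add_cancel hm] at hc
  set e : ℕ → ℝ := fun N => 1 / ((N : ℝ) + 1) with he
  have hepos : ∀ N, 0 < e N := fun N => by positivity
  have hele : ∀ N, e N ≤ 1 := fun N => by
    rw [he]; simp only; rw [div_le_one (by positivity)]; linarith [(Nat.cast_nonneg N : (0:ℝ) ≤ N)]
  have helim : Filter.Tendsto e Filter.atTop (nhds 0) := tendsto_one_div_add_atTop_nhds_zero_nat
  set S : ℕ → Fin (d + 1) → ℝ := fun N i => s i + e N * (i : ℕ) with hS
  have hsS : ∀ N i, s i ≤ S N i := fun N i => by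
    have : 0 ≤ e N * ((i : ℕ) : ℝ) := mul_nonneg (hepos N).le (Nat.cast_nonneg _)
    simp only [hS]; linarith
  have hSm : ∀ N, StrictMono (S N) := fun N i k hik => by
    have h1 := hs hik.le
    have h2 : ((i : ℕ) : ℝ) < (k : ℕ) := by exact_mod_cast hik
    have := mul_lt_mul_of_pos_left h2 (hepos N)
    simp only [hS]; linarith
  have hSlim : Filter.Tendsto S Filter.atTop (nhds s) := by
    rw [tendsto_pi_nhds]
    intro i
    simpa [hS] using (helim.mul_const ((i : ℕ) : ℝ)).const_add (s i)
  choose v hvm hvpos hvs hvp hvb using fun N =>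
    hc (S N) (hSm N) (fun i => (hspos i).trans_le (hsS N i)) (fun i => (hls i).trans (hsS N _))
  have hcpt : IsCompact (Set.Icc (fun _ : Fin d => (0 : ℝ)) (fun i => s i.succ + (d + 1))) :=
    isCompact_Icc
  obtain ⟨w, -, φ, hφ, hw⟩ := hcpt.tendsto_subseq (x := v) (fun N => by
    refine ⟨fun i => (hvpos N i).le, fun i => (hvs N i).trans ?_⟩
    simp only [hS]
    have h1 : (((i.succ : Fin (d + 1)) : ℕ) : ℝ) ≤ d + 1 := by
      exact_mod_cast i.succ.2.le
    have h2 : e N * (((i.succ : Fin (d + 1)) : ℕ) : ℝ) ≤ 1 * (((i.succ : Fin (d + 1)) : ℕ) : ℝ) :=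
      mul_le_mul_of_nonneg_right (hele N) (Nat.cast_nonneg _)
    linarith)
  have hwi : ∀ i, Filter.Tendsto (fun N => v (φ N) i) Filter.atTop (nhds (w i)) :=
    tendsto_pi_nhds.1 hw
  refine ⟨c, w, ?_, ?_, ?_⟩
  · intro i k hik
    exact le_of_tendsto_of_tendsto' (hwi i) (hwi k) fun N => (hvm _).monotone hik
  · ext k
    have h1 := ((continuous_coeff_prod (d := d) m k).tendsto w).comp hw
    have h2 := ((continuous_coeff_prod (d := d + 1) m (k + m)).tendsto s).comp
      (hSlim.comp hφ.tendsto_atTop)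
    have h3 := h2.const_smul ((k + m).descFactorial m)
    have h4 := h1.const_mul c
    rw [coeff_iterate_derivative, coeff_C_mul]
    refine tendsto_nhds_unique h3 (h4.congr fun N => ?_)
    have := congrArg (fun p => coeff p k) (hvp (φ N))
    simp only [coeff_iterate_derivative, Nat.sub_self, pow_zero, one_mul, coeff_C_mul] at this
    simp only [Function.comp_apply]
    exact this.symm
  · intro i hi
    exact ge_of_tendsto' (hwi i) fun N => hvb _ i hi

/-! ### Conclusion -/

/-- For a nondecreasing sequence of positive radii `(rn_j)`, write the
`m`-th derivative of `P_{n,m}(z) = Π_j (z^m - rn_j^m)` as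
`((nm)!/((n-1)m)!) · Π_{j=1}^{n-1} (z^m - R_j^m)` with `(R_j)` nondecreasing positive.
If `(r_j)` is strictly increasing positive with `α = max_j r_j/r_{j+1}` and `rn_j ≥ r_j`
for all `j`, then
`R_j ≥ (1 - 1/max(1, j - 1 - (2 + log_-(m·log α⁻¹))/(m·log α⁻¹)))·r_{j+1}`
(indices counted from `1`). -/
theorem stmt9 (n m : ℕ) (hn : 2 ≤ n) (hm : 1 ≤ m)
    (rn : Fin n → ℝ) (hrn : Monotone rn) (hrnpos : ∀ j, 0 < rn j)
    (R : Fin (n - 1) → ℝ) (hR : Monotone R) (hRpos : ∀ j, 0 < R j)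
    (hfac : derivative^[m] (∏ j, (X ^ m - C (rn j ^ m)))
        = C ((Nat.factorial (n * m) : ℝ) / (Nat.factorial ((n - 1) * m) : ℝ)) *
            ∏ j, (X ^ m - C (R j ^ m)))
    (r : Fin n → ℝ) (hr : StrictMono r) (hrpos : ∀ j, 0 < r j)
    (α : ℝ)
    (hα : IsGreatest {x : ℝ | ∃ i j : Fin n, (i : ℕ) + 1 = (j : ℕ) ∧ x = r i / r j} α)
    (hlb : ∀ j, r j ≤ rn j) :
    ∀ (j : Fin (n - 1)) (j' : Fin n), (j' : ℕ) = (j : ℕ) + 1 →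
      (1 - 1 / max 1 (((j : ℕ) + 1 : ℝ) - 1
          - (2 + logMinus ((m : ℝ) * Real.log α⁻¹)) / ((m : ℝ) * Real.log α⁻¹)))
        * r j' ≤ R j := by
  obtain ⟨d, rfl⟩ : ∃ d, n = d + 1 := ⟨n - 1, by omega⟩
  change Fin d → ℝ at R
  intro j j' hj
  change Fin d at j
  have hmR : (0 : ℝ) < m := by exact_mod_cast hm
  have hα0 : 0 < α := by
    obtain ⟨i, k, -, rfl⟩ := hα.1
    exact div_pos (hrpos i) (hrpos k)
  have hα1 : α < 1 := by
    obtain ⟨i, k, hik, rfl⟩ := hα.1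
    rw [div_lt_one (hrpos k)]
    exact hr (Fin.lt_def.2 (by omega))
  set lam : ℝ := (m : ℝ) * Real.log α⁻¹ with hlamdef
  have hlam : 0 < lam := mul_pos hmR (Real.log_pos ((one_lt_inv₀ hα0).2 hα1))
  have hexp : Real.exp lam = (α⁻¹) ^ m := by
    rw [hlamdef, mul_comm, Real.exp_mul, Real.exp_log (by positivity), Real.rpow_natCast]
  have hrat : ∀ (p : ℕ) (i k : Fin (d + 1)), (k : ℕ) = i + p → r i * (α⁻¹) ^ p ≤ r k := by
    intro p
    induction p with
    | zero =>
      intro i k h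
      have : k = i := Fin.ext (by omega)
      simp [this]
    | succ p ih =>
      intro i k h
      have h1 := ih i ⟨i + p, by omega⟩ rfl
      have h2 := hα.2 ⟨⟨i + p, by omega⟩, k, by simp only; omega, rfl⟩
      rw [div_le_iff₀ (hrpos k)] at h2
      calc r i * (α⁻¹) ^ (p + 1) = (r i * (α⁻¹) ^ p) * α⁻¹ := by ring
        _ ≤ (α * r k) * α⁻¹ := mul_le_mul_of_nonneg_right (h1.trans h2) (by positivity)
        _ = r k := by field_simp
  obtain ⟨c, v, hvm, hvp, hvb⟩ := monotone_case d m hm lam hlam (fun i => r i.succ ^ m)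
    (fun i => pow_pos (hrpos _) m)
    (by
      intro i k hik
      have hik' : (i : ℕ) ≤ k := hik
      have h1 : Real.exp (lam * ((k : ℝ) - i)) = ((α⁻¹) ^ ((k : ℕ) - (i : ℕ))) ^ m := by
        rw [Real.exp_mul, hexp, ← Nat.cast_sub hik', Real.rpow_natCast, ← pow_mul, ← pow_mul,
          mul_comm]
      have h2 := hrat ((k : ℕ) - i) i.succ k.succ (by simp only [Fin.val_succ]; omega)
      rw [h1, ← mul_pow]
      exact pow_le_pow_left₀ (by have := hrpos i.succ; positivity) h2 m)
    (fun i => rn i ^ m) (fun i k h => pow_le_pow_left₀ (hrnpos i).le (hrn h) m)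
    (fun i => pow_pos (hrnpos i) m) (fun i => pow_le_pow_left₀ (hrpos _).le (hlb _) m)
  have hmon : ∀ s : Fin d → ℝ, (∏ i, (X ^ m - C (s i))).Monic := fun s =>
    monic_prod_of_monic _ _ fun i _ => monic_X_pow_sub_C _ (by omega)
  have hfac2 : C c * ∏ i, (X ^ m - C (v i)) =
      C ((Nat.factorial ((d + 1) * m) : ℝ) / (Nat.factorial (d * m) : ℝ)) *
        ∏ i : Fin d, (X ^ m - C (R i ^ m)) := hvp.symm.trans hfac
  set c' : ℝ := (Nat.factorial ((d + 1) * m) : ℝ) / (Nat.factorial (d * m) : ℝ) with hc'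
  have hc'pos : 0 < c' := by positivity
  have hcc : c = c' := by
    have := congrArg leadingCoeff hfac2
    simpa only [leadingCoeff_mul, leadingCoeff_C, (hmon _).leadingCoeff, mul_one] using this
  have hvR : v = fun i => R i ^ m := by
    apply monotone_eq_of_prod_eq_s9 _ _ hvm
    · exact fun i k h => pow_le_pow_left₀ (hRpos i).le (hR h) m
    · rw [hcc] at hfac2
      have h1 := mul_left_cancel₀ (C_ne_zero.2 hc'pos.ne') hfac2
      rw [prod_X_pow_eq_expand, prod_X_pow_eq_expand m (fun i => R i ^ m)] at h1
      exact expand_injective (by omega) h1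
  have hj' : j' = j.succ := Fin.ext (by simpa using hj)
  have hK : (((j : ℕ) + 1 : ℝ) - 1 - (2 + logMinus lam) / lam) = lossIndex lam j := by
    unfold lossIndex; ring
  rw [hK, hj']
  rcases le_or_gt (lossIndex lam j) 1 with h | h
  · rw [max_eq_left h]
    simpa using (hRpos j).le
  · rw [max_eq_right h.le]
    have h1 := hvb j h
    rw [hvR] at h1
    simp only at h1
    rw [← mul_pow, mul_comm] at h1
    exact le_of_pow_le_pow_left₀ (by omega) (hRpos j).le h1
end

section
/- Let ν_0 be a compactly supported probability measure on [0, ∞). For each n ≥ 1 let (r^{(n)}_j)_{1 ≤ j ≤ n} be an increasing sequence of positive reals such that the empirical measures (1/n) Σ_{j=1}^n δ_{r^{(n)}_j} converge weakly to ν_0, and let (m_n)_{n ≥ 1} be a sequence of positive integers with m_n/(n log n) → ∞. Fix t ∈ (0,1). Then there exists a nonincreasing sequence (η_j)_{j ≥ 4} of positive reals tending to 0, depending only on the sequence (m_n), such that for all sufficiently large n the following holds: ⌊n m_n t⌋ = ℓ m_n − q with 1 ≤ ℓ ≤ n−1, nt − 1 ≤ ℓ ≤ nt + 1 and 0 ≤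 q ≤ m_n − 1; and the roots of the ⌊n m_n t⌋-th derivative of P_{n,m_n}, counted with multiplicity, are 0 with multiplicity q together with the points s_j e^{2πik/m_n} for 1 ≤ j ≤ n−ℓ and 0 ≤ k ≤ m_n − 1, where for all 4 ≤ j ≤ n−ℓ: e^{−η_j} · ((j−1)/(j−1+nt)) · r^{(n)}_{j+ℓ} ≤ s_j ≤ e^{η_j} · ((j−1)/(j−1+nt)) · r^{(n)}_{j+ℓ}. -/
/-!
Write `y = X ^ m`, so that `P = Q(X ^ m)` with `Q = ∏ (y - r_j ^ m)`. By Rolle's theorem on the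
positive half-line, each derivative of `P` again has the form `c X ^ q ∏ (X ^ m - s_j ^ m)` with
distinct positive `s_j` (`iterate_derivative_factors`).

For a polynomial with positive roots `R_0 ≤ ... ≤ R_{n-1}`, the quotient of its coefficients of
index `j` and `j + 1` equals `R_j` in absolute value up to a factor `2 ^ n` in either direction
(`abs_coeff_bounds`). Applied to both `Q` and the polynomial in `y` obtained after `K`
differentiations, this gives `s_j ^ m = r_{j+ℓ} ^ m * D_j / D_{j+1}` up to a factor `4 ^ n`, where
`D_j` is the descending factorial by which differentiation multiplies the coefficient
(`coeff_identity`, `root_bounds`). The quotient `D_j / D_{j+1}` is a product of `m` factors, each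
between `j / (j + n t)` and `(j + 2) / (j + n t)` (`descFactorial_bounds`).

After taking `m`-th roots the total error in `log s_j` is at most `2 / j + 2 n / m_n`. Since
`n / m_n → 0` and `j ≤ n`, the sequence `η_j = 2 / (j - 1) + sup_{n ≥ j} 2 n / m_n`, with `j` now
counted from `1`, has the required properties.
-/

open Polynomial MeasureTheory Filter Topology

/-! ### Real-rootedness of the derivatives -/

theorem eq_C_mul_prod_X_sub_C {p : ℕ} (f : ℝ[X]) (hf : f.natDegree ≤ p) (v : Fin p → ℝ)
    (hv : Function.Injective v) (h0 : ∀ i, f.eval (v i) = 0) :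
    f = C (f.coeff p) * ∏ i, (X - C (v i)) := by
  have hmon : (∏ i, (X - C (v i))).Monic := monic_prod_of_monic _ _ fun i _ => monic_X_sub_C _
  have hdeg : (∏ i, (X - C (v i))).natDegree = p := by
    rw [natDegree_prod_of_monic _ _ fun i _ => monic_X_sub_C _]; simp
  refine eq_of_degree_sub_lt_of_eval_index_eq (Finset.univ : Finset (Fin p)) hv.injOn ?_ ?_
  · rw [Finset.card_univ, Fintype.card_fin, degree_lt_iff_coeff_zero]
    intro k hk
    rw [coeff_sub, coeff_C_mul]
    rcases hk.eq_or_lt with rfl | hk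
    · have : (∏ i, (X - C (v i))).coeff p = 1 := by
        have := hmon.coeff_natDegree
        rwa [hdeg] at this
      rw [this]; ring
    · rw [coeff_eq_zero_of_natDegree_lt (lt_of_le_of_lt hf hk),
        coeff_eq_zero_of_natDegree_lt (lt_of_eq_of_lt hdeg hk)]; ring
  · intro i _
    rw [h0, eval_mul, eval_prod, Finset.prod_eq_zero (Finset.mem_univ i) (by simp), mul_zero]

/-- Rolle's theorem between consecutive zeros of a polynomial; only the lower half of the
interlacing is recorded. -/
theorem exists_interlacing_critical_points {k : ℕ} (f : ℝ[X]) (x : Fin (k + 1) → ℝ)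
    (hx : StrictMono x) (h0 : ∀ i, f.eval (x i) = 0) :
    ∃ z : Fin k → ℝ, StrictMono z ∧ (∀ i, x i.castSucc < z i) ∧
      ∀ i, (derivative f).eval (z i) = 0 := by
  have h : ∀ i : Fin k, ∃ z, x i.castSucc < z ∧ z < x i.succ ∧ (derivative f).eval z = 0 := by
    intro i
    obtain ⟨z, hz, hz'⟩ := exists_deriv_eq_zero (hx (Fin.castSucc_lt_succ (i := i)))
      f.continuous.continuousOn (by rw [h0, h0])
    exact ⟨z, hz.1, hz.2, by rwa [Polynomial.deriv] at hz'⟩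
  choose z hz1 hz2 hz3 using h
  refine ⟨z, fun i j hij => ?_, hz1, hz3⟩
  exact (hz2 i).trans_le ((hx.monotone (by simpa [Fin.le_def] using hij)).trans (hz1 j).le)

theorem expand_prod_X_sub_C {p : ℕ} (m : ℕ) (s : Fin p → ℝ) :
    expand ℝ m (∏ j, (X - C (s j ^ m))) = ∏ j, (X ^ m - C (s j ^ m)) := by
  simp [map_prod]

/-- One derivative when `0` is a root: Rolle's theorem on the zeros `0 < s_1 < ... < s_p` gives `p`
positive critical points, whose `m`-th powers are all the roots of the degree `p` polynomial `G`
with `f' = X ^ q * G(X ^ m)`. -/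
theorem derivative_step_pos {m p q : ℕ} (hm : 1 ≤ m) (s : Fin p → ℝ) (hs : StrictMono s)
    (hpos : ∀ j, 0 < s j) :
    ∃ z : Fin p → ℝ, StrictMono z ∧ (∀ j, 0 < z j) ∧ ∃ c : ℝ, c ≠ 0 ∧
      derivative (X ^ (q + 1) * ∏ j, (X ^ m - C (s j ^ m))) =
        C c * X ^ q * ∏ j, (X ^ m - C (z j ^ m)) := by
  set Q : ℝ[X] := ∏ j, (X - C (s j ^ m)) with hQ
  have hQmon : Q.Monic := monic_prod_of_monic _ _ fun i _ => monic_X_sub_C _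
  have hQdeg : Q.natDegree = p := by
    rw [hQ, natDegree_prod_of_monic _ _ fun i _ => monic_X_sub_C _]
    simp only [natDegree_X_sub_C, Finset.sum_const, Finset.card_univ, Fintype.card_fin,
      smul_eq_mul, mul_one]
  set G : ℝ[X] := C ((q : ℝ) + 1) * Q + C (m : ℝ) * (X * derivative Q) with hG
  have hder : derivative (X ^ (q + 1) * ∏ j, (X ^ m - C (s j ^ m))) = X ^ q * expand ℝ m G := by
    rw [← expand_prod_X_sub_C, ← hQ, derivative_mul, derivative_X_pow, derivative_expand, hG]
    obtain ⟨m, rfl⟩ : ∃ k, m = k + 1 := ⟨m - 1, by omega⟩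
    simp only [map_add, map_mul, expand_C, expand_X, Nat.add_sub_cancel]
    push_cast
    simp only [map_add, map_natCast, map_one]
    ring
  have hGcoeff : ∀ k, G.coeff k = ((q : ℝ) + 1 + m * k) * Q.coeff k := by
    intro k
    rw [hG, coeff_add, coeff_C_mul, coeff_C_mul]
    cases k with
    | zero => simp
    | succ k => rw [coeff_X_mul, coeff_derivative]; push_cast; ring
  have hGp : G.coeff p ≠ 0 := by
    have h1 : Q.coeff p = 1 := by have := hQmon.coeff_natDegree; rwa [hQdeg] at this
    rw [hGcoeff, h1]; positivity
  have hGdeg : G.natDegree ≤ p := natDegree_le_iff_coeff_eq_zero.2 fun k hk => by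
    rw [hGcoeff, coeff_eq_zero_of_natDegree_lt (hQdeg.trans_lt hk), mul_zero]
  obtain ⟨z, hz1, hz2, hz3⟩ := exists_interlacing_critical_points
    (X ^ (q + 1) * ∏ j, (X ^ m - C (s j ^ m))) (Fin.cons 0 s : Fin (p + 1) → ℝ)
    (Fin.strictMono_cons.2 ⟨hpos, hs⟩)
    (by
      intro i
      refine Fin.cases ?_ (fun i => ?_) i
      · simp
      · rw [eval_mul, eval_prod, Finset.prod_eq_zero (Finset.mem_univ i) (by simp), mul_zero])
  have hzpos : ∀ j, 0 < z j := by
    intro j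
    refine lt_of_le_of_lt ?_ (hz2 j)
    refine Fin.cases ?_ (fun i => ?_) j.castSucc
    · simp
    · simpa using (hpos i).le
  refine ⟨z, hz1, hzpos, G.coeff p, hGp, ?_⟩
  have hfac := eq_C_mul_prod_X_sub_C G hGdeg (fun j => z j ^ m)
    (fun i j hij => hz1.injective
      ((pow_left_inj₀ (hzpos i).le (hzpos j).le (by omega)).1 hij))
    (fun i => by
      have h := hz3 i
      rw [hder, eval_mul, eval_pow, eval_X, expand_eval] at h
      exact (mul_eq_zero.1 h).resolve_left (pow_ne_zero _ (hzpos i).ne'))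
  rw [hder, ← expand_prod_X_sub_C]
  conv_lhs => rw [hfac]
  rw [map_mul, expand_C]
  ring

/-- One derivative when `0` is not a root: the number of positive roots drops by one, and the origin
becomes a root of multiplicity `m - 1`. -/
theorem derivative_step_zero {m p : ℕ} (hm : 1 ≤ m) (s : Fin (p + 1) → ℝ) (hs : StrictMono s)
    (hpos : ∀ j, 0 < s j) :
    ∃ z : Fin p → ℝ, StrictMono z ∧ (∀ j, 0 < z j) ∧ ∃ c : ℝ, c ≠ 0 ∧
      derivative (∏ j, (X ^ m - C (s j ^ m))) =
        C c * X ^ (m - 1) * ∏ j, (X ^ m - C (z j ^ m)) := by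
  set Q : ℝ[X] := ∏ j, (X - C (s j ^ m)) with hQ
  have hQmon : Q.Monic := monic_prod_of_monic _ _ fun i _ => monic_X_sub_C _
  have hQdeg : Q.natDegree = p + 1 := by
    rw [hQ, natDegree_prod_of_monic _ _ fun i _ => monic_X_sub_C _]
    simp only [natDegree_X_sub_C, Finset.sum_const, Finset.card_univ, Fintype.card_fin,
      smul_eq_mul, mul_one]
  have hder : derivative (∏ j, (X ^ m - C (s j ^ m))) =
      C (m : ℝ) * X ^ (m - 1) * expand ℝ m (derivative Q) := by
    rw [← expand_prod_X_sub_C, ← hQ, derivative_expand, map_natCast]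
    ring
  have hGp : (derivative Q).coeff p ≠ 0 := by
    have h1 : Q.coeff (p + 1) = 1 := by have := hQmon.coeff_natDegree; rwa [hQdeg] at this
    rw [coeff_derivative, h1]; positivity
  have hGdeg : (derivative Q).natDegree ≤ p := by
    have := natDegree_derivative_le Q
    omega
  obtain ⟨z, hz1, hz2, hz3⟩ := exists_interlacing_critical_points
    (∏ j, (X ^ m - C (s j ^ m))) s hs
    (by
      intro i
      rw [eval_prod, Finset.prod_eq_zero (Finset.mem_univ i) (by simp)])
  have hzpos : ∀ j, 0 < z j := fun j => (hpos _).trans (hz2 j)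
  have hm0 : (m : ℝ) ≠ 0 := by positivity
  refine ⟨z, hz1, hzpos, m * (derivative Q).coeff p, mul_ne_zero hm0 hGp, ?_⟩
  have hfac := eq_C_mul_prod_X_sub_C (derivative Q) hGdeg (fun j => z j ^ m)
    (fun i j hij => hz1.injective
      ((pow_left_inj₀ (hzpos i).le (hzpos j).le (by omega)).1 hij))
    (fun i => by
      have h := hz3 i
      rw [hder, eval_mul, eval_mul, eval_pow, eval_X, eval_C, expand_eval] at h
      exact (mul_eq_zero.1 h).resolve_left (mul_ne_zero hm0 (pow_ne_zero _ (hzpos i).ne')))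
  rw [hder, ← expand_prod_X_sub_C]
  conv_lhs => rw [hfac]
  rw [map_mul, expand_C, C_mul]
  ring

/-- The `K`-th derivative keeps the rotational symmetry, and all its nonzero roots have the form
`s_j e^{2πik/m}` with distinct positive `s_j`. The equation `p m + q + K = n m` with `q < m`
determines `p` and `q`. -/
theorem iterate_derivative_factors {m n : ℕ} (hm : 1 ≤ m) (r : Fin n → ℝ) (hr : StrictMono r)
    (hpos : ∀ j, 0 < r j) (K : ℕ) :
    ∀ p q : ℕ, p * m + q + K = n * m → q < m →
    ∃ s : Fin p → ℝ, StrictMono s ∧ (∀ j, 0 < s j) ∧ ∃ c : ℝ, c ≠ 0 ∧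
      derivative^[K] (∏ j, (X ^ m - C (r j ^ m))) =
        C c * X ^ q * ∏ j, (X ^ m - C (s j ^ m)) := by
  induction K with
  | zero =>
    intro p q h hq
    obtain rfl : p = n := by
      by_contra hne
      rcases Nat.lt_or_gt_of_ne hne with h' | h' <;> nlinarith
    obtain rfl : q = 0 := by omega
    exact ⟨r, hr, hpos, 1, one_ne_zero, by simp⟩
  | succ K ih =>
    intro p q h hq
    rw [Function.iterate_succ_apply']
    by_cases hq' : q + 1 < m
    · obtain ⟨s, hs, hs0, c, hc, heq⟩ := ih p (q + 1) (by omega) hq'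
      obtain ⟨z, hz, hz0, d, hd, heq'⟩ := derivative_step_pos (q := q) hm s hs hs0
      refine ⟨z, hz, hz0, c * d, mul_ne_zero hc hd, ?_⟩
      rw [heq, mul_assoc, derivative_C_mul, heq', C_mul]
      ring
    · obtain rfl : m = q + 1 := by omega
      obtain ⟨s, hs, hs0, c, hc, heq⟩ := ih (p + 1) 0 (by rw [← h]; ring) (by omega)
      obtain ⟨z, hz, hz0, d, hd, heq'⟩ := derivative_step_zero hm s hs hs0
      refine ⟨z, hz, hz0, c * d, mul_ne_zero hc hd, ?_⟩
      rw [heq, mul_assoc, derivative_C_mul, pow_zero, one_mul, heq', C_mul, Nat.add_sub_cancel]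
      ring

/-! ### Roots and ratios of coefficients -/

/-- For increasing positive roots `R_0 ≤ ... ≤ R_{n-1}` the `i`-th coefficient is, up to sign, an
elementary symmetric function whose largest monomial is the product of the `n - i` largest roots,
and it has at most `2 ^ n` monomials. -/
theorem signed_coeff_bounds (R : ℕ → ℝ) (n : ℕ) (hpos : ∀ j, j < n → 0 < R j)
    (hmono : ∀ i j, i ≤ j → j < n → R i ≤ R j) (i : ℕ) (hi : i ≤ n) :
    ∏ j ∈ Finset.Ico i n, R j ≤
        (-1) ^ (n + i) * (∏ j ∈ Finset.range n, (X - C (R j))).coeff i ∧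
      (-1) ^ (n + i) * (∏ j ∈ Finset.range n, (X - C (R j))).coeff i ≤
        2 ^ n * ∏ j ∈ Finset.Ico i n, R j := by
  induction n generalizing i with
  | zero => obtain rfl : i = 0 := by omega
            simp
  | succ n ih =>
    have ih := fun i hi => ih (fun j hj => hpos j (by omega))
      (fun i j hij hj => hmono i j hij (by omega)) i hi
    have hRn := hpos n (by omega)
    have hP : ∀ i, 0 < ∏ j ∈ Finset.Ico i n, R j := fun i =>
      Finset.prod_pos fun j hj => hpos j (by have := Finset.mem_Ico.1 hj; omega)
    rw [Finset.prod_range_succ]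
    set Q := ∏ j ∈ Finset.range n, (X - C (R j)) with hQ
    have hbig : (1 : ℝ) ≤ 2 ^ n := one_le_pow₀ (by norm_num)
    rcases i with _ | i
    · obtain ⟨h1, h2⟩ := ih 0 (by omega)
      have hP0 := hP 0
      rw [Finset.prod_Ico_succ_top (by omega)]
      have hc : (-1 : ℝ) ^ (n + 1 + 0) * (Q * (X - C (R n))).coeff 0 =
          ((-1) ^ (n + 0) * Q.coeff 0) * R n := by
        rw [mul_coeff_zero]; simp; ring
      rw [hc]
      refine ⟨by gcongr, ?_⟩
      have : 0 < 2 ^ n * (∏ j ∈ Finset.Ico 0 n, R j) * R n := by positivity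
      have h3 := mul_le_mul_of_nonneg_right h2 hRn.le
      rw [pow_succ]; linarith
    · have hc : (-1 : ℝ) ^ (n + 1 + (i + 1)) * (Q * (X - C (R n))).coeff (i + 1) =
          (-1) ^ (n + i) * Q.coeff i + ((-1) ^ (n + (i + 1)) * Q.coeff (i + 1)) * R n := by
        rw [coeff_mul_X_sub_C]; ring
      rw [hc]
      obtain ⟨h1, h2⟩ := ih i (by omega)
      have hPi := hP i
      rcases (Nat.lt_succ_iff.1 hi).eq_or_lt with rfl | hlt
      · have hz : Q.coeff (i + 1) = 0 := by
          apply coeff_eq_zero_of_natDegree_lt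
          rw [hQ, natDegree_prod_of_monic _ _ fun i _ => monic_X_sub_C _]; simp
        rw [hz]
        simp only [Finset.Ico_self, Finset.prod_empty] at h1 h2 ⊢
        rw [pow_succ]
        constructor <;> linarith
      · obtain ⟨h3, h4⟩ := ih (i + 1) hlt
        have hPi' := hP (i + 1)
        rw [Finset.prod_Ico_succ_top hlt]
        rw [Finset.prod_eq_prod_Ico_succ_bot hlt] at h1 h2 hPi
        have h5 := mul_le_mul_of_nonneg_right h3 hRn.le
        have h6 := mul_le_mul_of_nonneg_right h4 hRn.le
        have h7 := mul_le_mul_of_nonneg_right (hmono i n hlt.le (by omega)) hPi'.le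
        have h8 := mul_le_mul_of_nonneg_left h7 (by positivity : (0 : ℝ) ≤ 2 ^ n)
        refine ⟨by linarith, ?_⟩
        rw [pow_succ]
        linarith

/-- The `j`-th smallest root equals the ratio of consecutive coefficients up to a factor `2 ^ n`.
Indices start at `0`. -/
theorem abs_coeff_bounds {n : ℕ} (R : Fin n → ℝ) (hpos : ∀ j, 0 < R j) (hmono : Monotone R)
    (j : Fin n) :
    0 < |(∏ j, (X - C (R j))).coeff ((j : ℕ) + 1)| ∧
    R j * |(∏ j, (X - C (R j))).coeff ((j : ℕ) + 1)| ≤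
        2 ^ n * |(∏ j, (X - C (R j))).coeff j| ∧
      |(∏ j, (X - C (R j))).coeff j| ≤
        2 ^ n * (R j * |(∏ j, (X - C (R j))).coeff ((j : ℕ) + 1)|) := by
  set R' : ℕ → ℝ := fun j => if h : j < n then R ⟨j, h⟩ else 1 with hR'
  have hR'j : ∀ j : Fin n, R' j = R j := fun j => by simp [hR']
  have hprod : ∏ j, (X - C (R j)) = ∏ j ∈ Finset.range n, (X - C (R' j)) := by
    rw [← Fin.prod_univ_eq_prod_range (fun j => X - C (R' j))]
    exact Finset.prod_congr rfl fun j _ => by rw [hR'j]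
  have hpos' : ∀ j, j < n → 0 < R' j := fun j hj => by simp [hR', hj, hpos]
  have hmono' : ∀ i j, i ≤ j → j < n → R' i ≤ R' j := fun i j hij hj => by
    simp only [hR', hj, hij.trans_lt hj, dif_pos]
    exact hmono hij
  have key : ∀ i, i ≤ n → ∏ j ∈ Finset.Ico i n, R' j ≤ |(∏ j, (X - C (R j))).coeff i| ∧
      |(∏ j, (X - C (R j))).coeff i| ≤ 2 ^ n * ∏ j ∈ Finset.Ico i n, R' j := by
    intro i hi
    have hP : 0 < ∏ j ∈ Finset.Ico i n, R' j :=
      Finset.prod_pos fun j hj => hpos' j (by have := Finset.mem_Ico.1 hj; omega)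
    have h := signed_coeff_bounds R' n hpos' hmono' i hi
    rw [← hprod] at h
    have habs : |(∏ j, (X - C (R j))).coeff i| =
        (-1) ^ (n + i) * (∏ j, (X - C (R j))).coeff i := by
      rw [← abs_of_pos (hP.trans_le h.1), abs_mul, abs_pow]; simp
    rwa [habs]
  obtain ⟨h1, h2⟩ := key j j.2.le
  obtain ⟨h3, h4⟩ := key (j + 1) j.2
  have hP : 0 < ∏ j ∈ Finset.Ico ((j : ℕ) + 1) n, R' j :=
    Finset.prod_pos fun j hj => hpos' j (by have := Finset.mem_Ico.1 hj; omega)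
  rw [Finset.prod_eq_prod_Ico_succ_bot j.2, hR'j] at h1 h2
  have hj := hpos j
  refine ⟨hP.trans_le h3, ?_, ?_⟩
  · calc _ ≤ R j * (2 ^ n * ∏ j ∈ Finset.Ico ((j : ℕ) + 1) n, R' j) := by gcongr
      _ = 2 ^ n * (R j * ∏ j ∈ Finset.Ico ((j : ℕ) + 1) n, R' j) := by ring
      _ ≤ _ := by gcongr
  · exact h2.trans (by gcongr)

/-! ### The factors produced by differentiation -/

/-- Both sides are `(x + m + K)! / x!`. -/
theorem descFactorial_ratio (m K x : ℕ) :
    (x + K).descFactorial K * ∏ u ∈ Finset.range m, (x + K + 1 + u) =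
      (x + m + K).descFactorial K * ∏ u ∈ Finset.range m, (x + 1 + u) := by
  have h1 := Nat.factorial_mul_descFactorial (Nat.le_add_left K x)
  have h2 := Nat.factorial_mul_descFactorial (Nat.le_add_left K (x + m))
  have h3 := Nat.factorial_mul_ascFactorial x m
  have h4 := Nat.factorial_mul_ascFactorial (x + K) m
  rw [Nat.ascFactorial_eq_prod_range] at h3 h4
  rw [Nat.add_sub_cancel] at h1 h2
  rw [show x + K + m = x + m + K by ring, ← h1, ← h2, ← h3] at h4
  refine Nat.eq_of_mul_eq_mul_left (Nat.factorial_pos x) ?_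
  linarith

/-- The ratio of the factors by which differentiation multiplies consecutive coefficients is a
product of `m` quotients `v / (v + K)` with `j m < v ≤ (j + 2) m`, and `K` is `m τ` up to rounding; hence
each quotient lies between `j / (j + τ)` and `(j + 2) / (j + τ)`. -/
theorem descFactorial_bounds {m K j q : ℕ} {τ : ℝ} (hm : 1 ≤ m) (hj : 1 ≤ j) (hτ : 0 < τ)
    (hq : q < m) (hK : (K : ℝ) ≤ m * τ) (hK' : m * τ - 1 ≤ K) :
    ((j : ℝ) / (j + τ)) ^ m * ((j * m + q + m + K).descFactorial K : ℝ) ≤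
        ((j * m + q + K).descFactorial K : ℝ) ∧
      ((j * m + q + K).descFactorial K : ℝ) ≤
        (((j : ℝ) + 2) / (j + τ)) ^ m * ((j * m + q + m + K).descFactorial K : ℝ) := by
  have hrat := descFactorial_ratio m K (j * m + q)
  have hj' : (1 : ℝ) ≤ j := by exact_mod_cast hj
  have hm' : (1 : ℝ) ≤ m := by exact_mod_cast hm
  have hq' : (q : ℝ) + 1 ≤ m := by exact_mod_cast hq
  set A : ℝ := ((j * m + q + K).descFactorial K : ℝ)
  set B : ℝ := ((j * m + q + m + K).descFactorial K : ℝ)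
  have hB : 0 ≤ B := by positivity
  set U : ℝ := ∏ u ∈ Finset.range m, ((j : ℝ) * m + q + K + 1 + u) with hU
  set V : ℝ := ∏ u ∈ Finset.range m, ((j : ℝ) * m + q + 1 + u) with hV
  have hUpos : 0 < U := Finset.prod_pos fun u _ => by positivity
  have hrat' : A * U = B * V := by
    have := congrArg (Nat.cast : ℕ → ℝ) hrat
    push_cast at this
    exact this
  have hpow : ∀ a : ℝ, a ^ m * U =
      ∏ u ∈ Finset.range m, a * ((j : ℝ) * m + q + K + 1 + u) := fun a => by
    rw [Finset.prod_mul_distrib, Finset.prod_const, Finset.card_range]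
  have hVl : ((j : ℝ) / (j + τ)) ^ m * U ≤ V := by
    rw [hpow, hV]
    refine Finset.prod_le_prod (fun u _ => by positivity) fun u _ => ?_
    rw [div_mul_eq_mul_div, div_le_iff₀ (by positivity)]
    have h1 : (j : ℝ) * K ≤ j * (m * τ) := by gcongr
    have h2 : (0 : ℝ) ≤ (q + 1 + u) * τ := by positivity
    nlinarith
  have hVu : V ≤ (((j : ℝ) + 2) / (j + τ)) ^ m * U := by
    rw [hpow, hV]
    refine Finset.prod_le_prod (fun u _ => by positivity) fun u hu => ?_
    have hu' : (u : ℝ) + 1 ≤ m := by exact_mod_cast Finset.mem_range.1 hu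
    rw [div_mul_eq_mul_div, le_div_iff₀ (by positivity)]
    set v : ℝ := (j : ℝ) * m + q + 1 + u with hv
    have hvu : v ≤ (j + 2) * m := by rw [hv]; linarith
    have hvl : (j : ℝ) + 1 ≤ v := by
      have : (j : ℝ) * 1 ≤ j * m := by gcongr
      have : (0 : ℝ) ≤ q := by positivity
      have : (0 : ℝ) ≤ u := by positivity
      rw [hv]; linarith
    have h1 : v * τ ≤ (j + 2) * m * τ := by gcongr
    have h2 : ((j : ℝ) + 2) * (m * τ - 1) ≤ (j + 2) * K := by gcongr
    have h3 : (j : ℝ) * m + q + K + 1 + u = v + K := by rw [hv]; ring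
    rw [h3]
    nlinarith
  constructor
  · refine le_of_mul_le_mul_right ?_ hUpos
    rw [hrat']
    calc _ = B * (((j : ℝ) / (j + τ)) ^ m * U) := by ring
      _ ≤ _ := by gcongr
  · refine le_of_mul_le_mul_right ?_ hUpos
    rw [hrat']
    calc B * V ≤ B * ((((j : ℝ) + 2) / (j + τ)) ^ m * U) := by gcongr
      _ = _ := by ring

/-! ### Localization of the roots -/

/-- Comparison of the coefficients of `X ^ (i m + q)` in the factorization of the `K`-th
derivative. -/
theorem coeff_identity {m n p q K ℓ : ℕ} (hm : 1 ≤ m) (hℓ : ℓ * m = K + q)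
    (r : Fin n → ℝ) (s : Fin p → ℝ) (c : ℝ)
    (heq : derivative^[K] (∏ j, (X ^ m - C (r j ^ m))) =
        C c * X ^ q * ∏ j, (X ^ m - C (s j ^ m))) (i : ℕ) :
    ((i * m + q + K).descFactorial K : ℝ) * |(∏ j, (X - C (r j ^ m))).coeff (i + ℓ)| =
      |c| * |(∏ j, (X - C (s j ^ m))).coeff i| := by
  have h := congrArg (fun f => coeff f (i * m + q)) heq
  rw [coeff_iterate_derivative, ← expand_prod_X_sub_C, ← expand_prod_X_sub_C, mul_assoc,
    coeff_C_mul, coeff_X_pow_mul, coeff_expand_mul hm, nsmul_eq_mul] at h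
  have h2 : i * m + q + K = (i + ℓ) * m := by rw [add_mul, hℓ]; ring
  rw [h2, coeff_expand_mul hm, ← h2] at h
  rw [← abs_mul, ← h, abs_mul, Nat.abs_cast]

/-- The `m`-th powers of the roots are determined up to the factor `exp (2 n)`, whose `m`-th root
tends to `1`. The factor comes from `2 ^ n * 2 ^ p ≤ exp (2 n)`. -/
theorem root_bounds {m n p q K ℓ : ℕ} {τ : ℝ} (hm : 1 ≤ m) (hp : p ≤ n) (hτ : 0 < τ)
    (hq : q < m) (hK : (K : ℝ) ≤ m * τ) (hK' : m * τ - 1 ≤ K) (hℓ : ℓ * m = K + q)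
    (r : Fin n → ℝ) (hr : StrictMono r) (hr0 : ∀ j, 0 < r j)
    (s : Fin p → ℝ) (hs : StrictMono s) (hs0 : ∀ j, 0 < s j) (c : ℝ) (hc : c ≠ 0)
    (heq : derivative^[K] (∏ j, (X ^ m - C (r j ^ m))) =
        C c * X ^ q * ∏ j, (X ^ m - C (s j ^ m)))
    (j : Fin p) (hj : 1 ≤ (j : ℕ)) (j' : Fin n) (hj' : (j' : ℕ) = j + ℓ) :
    ((j : ℝ) / (j + τ) * r j') ^ m ≤ Real.exp (2 * n) * s j ^ m ∧
      s j ^ m ≤ Real.exp (2 * n) * (((j : ℝ) + 2) / (j + τ) * r j') ^ m := by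
  obtain ⟨ha, ha1, ha2⟩ := abs_coeff_bounds (fun j => r j ^ m) (fun j => pow_pos (hr0 j) m)
    (fun i k hik => pow_le_pow_left₀ (hr0 i).le (hr.monotone hik) m) j'
  obtain ⟨hb, hb1, hb2⟩ := abs_coeff_bounds (fun j => s j ^ m) (fun j => pow_pos (hs0 j) m)
    (fun i k hik => pow_le_pow_left₀ (hs0 i).le (hs.monotone hik) m) j
  obtain ⟨hD1, hD2⟩ := descFactorial_bounds hm hj hτ hq hK hK'
  have e0 := coeff_identity hm hℓ r s c heq j
  have e1 := coeff_identity hm hℓ r s c heq (j + 1)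
  rw [show ((j : ℕ) + 1) * m + q + K = j * m + q + m + K by ring,
    show (j : ℕ) + 1 + ℓ = j + ℓ + 1 by ring] at e1
  rw [hj'] at ha ha1 ha2
  set a0 := |(∏ j, (X - C (r j ^ m))).coeff ((j : ℕ) + ℓ)|
  set a1 := |(∏ j, (X - C (r j ^ m))).coeff ((j : ℕ) + ℓ + 1)|
  set b0 := |(∏ j, (X - C (s j ^ m))).coeff (j : ℕ)|
  set b1 := |(∏ j, (X - C (s j ^ m))).coeff ((j : ℕ) + 1)|
  set D0 : ℝ := ((j * m + q + K).descFactorial K : ℝ)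
  set D1 : ℝ := ((j * m + q + m + K).descFactorial K : ℝ)
  have hc' : 0 < |c| := abs_pos.2 hc
  have hR : 0 < r j' ^ m := pow_pos (hr0 j') m
  have hS : 0 < s j ^ m := pow_pos (hs0 j) m
  have hD0 : 0 ≤ D0 := by positivity
  have hcb : 0 < |c| * b1 := mul_pos hc' hb
  have hexp : (2 : ℝ) ^ n * 2 ^ p ≤ Real.exp (2 * n) := by
    have h2 : (2 : ℝ) ≤ Real.exp 1 := by have := Real.add_one_le_exp (1 : ℝ); linarith
    have h3 : Real.exp (2 * n) = Real.exp 1 ^ n * Real.exp 1 ^ n := by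
      rw [← Real.exp_nat_mul, ← Real.exp_add]; ring_nf
    rw [h3]
    have h4 : (2 : ℝ) ^ p ≤ 2 ^ n := pow_le_pow_right₀ (by norm_num) hp
    have h5 : (2 : ℝ) ^ n ≤ Real.exp 1 ^ n := pow_le_pow_left₀ (by norm_num) h2 n
    calc (2 : ℝ) ^ n * 2 ^ p ≤ 2 ^ n * 2 ^ n := by gcongr
      _ ≤ _ := by gcongr
  rw [mul_pow, mul_pow]
  set ρ := ((j : ℝ) / (j + τ)) ^ m
  set ρ' := (((j : ℝ) + 2) / (j + τ)) ^ m
  have hρ' : 0 ≤ ρ' := by positivity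
  constructor
  · refine le_of_mul_le_mul_right ?_ hcb
    calc ρ * r j' ^ m * (|c| * b1) = (ρ * D1) * (r j' ^ m * a1) := by rw [← e1]; ring
      _ ≤ D0 * (2 ^ n * a0) := by gcongr
      _ = 2 ^ n * (|c| * b0) := by rw [← e0]; ring
      _ ≤ 2 ^ n * (|c| * (2 ^ p * (s j ^ m * b1))) := by gcongr
      _ = (2 ^ n * 2 ^ p) * s j ^ m * (|c| * b1) := by ring
      _ ≤ _ := by gcongr
  · refine le_of_mul_le_mul_right ?_ hcb
    calc s j ^ m * (|c| * b1) = |c| * (s j ^ m * b1) := by ring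
      _ ≤ |c| * (2 ^ p * b0) := by gcongr
      _ = 2 ^ p * (D0 * a0) := by rw [e0]; ring
      _ ≤ 2 ^ p * ((ρ' * D1) * (2 ^ n * (r j' ^ m * a1))) := by gcongr
      _ = (2 ^ n * 2 ^ p) * (ρ' * r j' ^ m) * (D1 * a1) := by ring
      _ = (2 ^ n * 2 ^ p) * (ρ' * r j' ^ m) * (|c| * b1) := by rw [e1]
      _ ≤ _ := by gcongr

/-- Extraction of `m`-th roots in the bounds of `root_bounds`, using `1 + 2 / j ≤ exp (2 / j)`. -/
theorem log_root_bounds {m n : ℕ} (hm : 1 ≤ m) {j τ r s η : ℝ} (hj : 1 ≤ j) (hτ : 0 < τ)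
    (hr : 0 < r) (hs : 0 < s) (hη : 2 / j + 2 * n / m ≤ η)
    (h1 : (j / (j + τ) * r) ^ m ≤ Real.exp (2 * n) * s ^ m)
    (h2 : s ^ m ≤ Real.exp (2 * n) * ((j + 2) / (j + τ) * r) ^ m) :
    Real.exp (-η) * (j / (j + τ)) * r ≤ s ∧ s ≤ Real.exp η * (j / (j + τ)) * r := by
  have hm0 : m ≠ 0 := by omega
  have hm' : (0 : ℝ) < m := by exact_mod_cast hm
  have hj0 : 0 < j := by linarith
  have hexp : Real.exp (2 * n) = Real.exp (2 * n / m) ^ m := by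
    rw [← Real.exp_nat_mul]; congr 1; field_simp
  rw [hexp, ← mul_pow] at h1 h2
  have h1 := (pow_le_pow_iff_left₀ (by positivity) (by positivity) hm0).1 h1
  have h2 := (pow_le_pow_iff_left₀ (by positivity) (by positivity) hm0).1 h2
  constructor
  · rw [Real.exp_neg, mul_assoc, inv_mul_le_iff₀ (Real.exp_pos _)]
    refine h1.trans (mul_le_mul_of_nonneg_right (Real.exp_le_exp.2 ?_) hs.le)
    have : 0 < 2 / j := by positivity
    linarith
  · refine h2.trans ?_
    have h3 : (j + 2) / (j + τ) ≤ Real.exp (2 / j) * (j / (j + τ)) := by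
      have h4 := Real.add_one_le_exp (2 / j)
      calc (j + 2) / (j + τ) = (2 / j + 1) * (j / (j + τ)) := by field_simp; ring
        _ ≤ _ := by gcongr
    calc Real.exp (2 * n / m) * ((j + 2) / (j + τ) * r)
        ≤ Real.exp (2 * n / m) * (Real.exp (2 / j) * (j / (j + τ)) * r) := by gcongr
      _ = Real.exp (2 / j + 2 * n / m) * (j / (j + τ)) * r := by rw [Real.exp_add]; ring
      _ ≤ _ := by gcongr

/-! ### The error sequence -/

theorem exists_antitone_majorant (f : ℕ → ℝ) (hf : Tendsto f atTop (𝓝 0)) (hf0 : ∀ n, 0 ≤ f n) :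
    ∃ g : ℕ → ℝ, Antitone g ∧ (∀ n, 0 ≤ g n) ∧ (∀ j n, j ≤ n → f n ≤ g j) ∧
      Tendsto g atTop (𝓝 0) := by
  have hb : ∀ j, BddAbove (Set.range fun k => f (j + k)) := fun j =>
    hf.bddAbove_range.mono (by rintro _ ⟨k, rfl⟩; exact ⟨j + k, rfl⟩)
  have hle : ∀ j n, j ≤ n → f n ≤ ⨆ k, f (j + k) := fun j n hjn => by
    have := le_ciSup (hb j) (n - j)
    simp only [Nat.add_sub_cancel' hjn] at this
    exact this
  have h0 : ∀ j, 0 ≤ ⨆ k, f (j + k) := fun j => (hf0 j).trans (hle j j le_rfl)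
  refine ⟨fun j => ⨆ k, f (j + k), fun i j hij => ciSup_le fun k => hle i _ (by omega), h0, hle, ?_⟩
  rw [Metric.tendsto_atTop]
  intro ε hε
  obtain ⟨N, hN⟩ := Metric.tendsto_atTop.1 hf (ε / 2) (by positivity)
  refine ⟨N, fun j hj => ?_⟩
  rw [Real.dist_eq, sub_zero, abs_of_nonneg (h0 j)]
  refine lt_of_le_of_lt (ciSup_le fun k => ?_) (half_lt_self hε)
  have := hN (j + k) (by omega)
  rw [Real.dist_eq, sub_zero] at this
  exact (le_abs_self _).trans this.le

theorem tendsto_two_mul_div (mseq : ℕ → ℕ)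
    (hgrowth : Tendsto (fun n : ℕ => (mseq n : ℝ) / ((n : ℝ) * Real.log n)) atTop atTop) :
    Tendsto (fun n : ℕ => 2 * (n : ℝ) / (mseq n : ℝ)) atTop (𝓝 0) := by
  have h1 : Tendsto (fun n : ℕ => (mseq n : ℝ) / (n : ℝ)) atTop atTop := by
    refine tendsto_atTop_mono' _ ?_ hgrowth
    filter_upwards [eventually_ge_atTop 3] with n hn
    have hn' : (3 : ℝ) ≤ n := by exact_mod_cast hn
    have hlog : 1 ≤ Real.log n := by
      rw [Real.le_log_iff_exp_le (by linarith)]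
      exact (Real.exp_one_lt_d9.le.trans (by norm_num)).trans hn'
    have : (n : ℝ) * 1 ≤ n * Real.log n := by gcongr
    exact div_le_div_of_nonneg_left (by positivity) (by linarith) (by linarith)
  have h2 := (h1.inv_tendsto_atTop).const_mul 2
  simp only [mul_zero] at h2
  refine h2.congr fun n => ?_
  simp only [Pi.inv_apply, inv_div]
  ring

/-- (Lemma 4.6 of the paper.) Given a sequence `(m_n)` of positive
integers with `m_n/(n log n) → ∞`, there is a positive nonincreasing sequence `(η_j)_{j≥4}`
tending to `0`, depending only on `(m_n)`, such that for every `t ∈ (0,1)`, every compactly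
supported probability measure `ν₀` on `[0,∞)` and every sampling `(r^{(n)}_j)` of `ν₀` by
increasing sequences of positive reals, the following holds for all sufficiently large `n`:
`⌊n m_n t⌋ = ℓ m_n - q` with `1 ≤ ℓ ≤ n-1`, `nt - 1 ≤ ℓ ≤ nt + 1`, `0 ≤ q ≤ m_n - 1`;
and the roots of the `⌊n m_n t⌋`-th derivative of `P_{n,m_n}`, counted with multiplicity,
are `0` with multiplicity `q` together with the points `s_j e^{2πik/m_n}`
(i.e. the derivative factors as `c·X^q·Π_{j=1}^{n-ℓ} (X^{m_n} - s_j^{m_n})`), where for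
`4 ≤ j ≤ n-ℓ`:
`e^{-η_j}·((j-1)/(j-1+nt))·r^{(n)}_{j+ℓ} ≤ s_j ≤ e^{η_j}·((j-1)/(j-1+nt))·r^{(n)}_{j+ℓ}`
(indices counted from `1`). -/
theorem stmt11 (mseq : ℕ → ℕ) (hm : ∀ n, 1 ≤ mseq n)
    (hgrowth : Tendsto (fun n : ℕ => (mseq n : ℝ) / ((n : ℝ) * Real.log n)) atTop atTop) :
    ∃ η : ℕ → ℝ, (∀ j, 4 ≤ j → 0 < η j) ∧ (∀ j k, 4 ≤ j → j ≤ k → η k ≤ η j) ∧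
      Tendsto η atTop (𝓝 0) ∧
      ∀ t : ℝ, t ∈ Set.Ioo (0 : ℝ) 1 →
      ∀ ν0 : Measure ℝ, IsProbabilityMeasure ν0 →
        ν0 (Set.Iio 0) = 0 → (∃ A : ℝ, ν0 (Set.Ioi A) = 0) →
      ∀ r : (n : ℕ) → Fin n → ℝ,
        (∀ n, StrictMono (r n)) → (∀ n j, 0 < r n j) →
        (∀ f : BoundedContinuousFunction ℝ ℝ,
          Tendsto (fun n : ℕ => ((n : ℝ))⁻¹ * ∑ j, f (r n j)) atTop
            (𝓝 (∫ x, f x ∂ν0))) →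
      ∀ᶠ n in atTop, ∃ ℓ q : ℕ,
        1 ≤ ℓ ∧ ℓ ≤ n - 1 ∧ (n : ℝ) * t - 1 ≤ (ℓ : ℝ) ∧ (ℓ : ℝ) ≤ (n : ℝ) * t + 1 ∧
        q ≤ mseq n - 1 ∧
        ℓ * mseq n = ⌊((n : ℝ) * (mseq n : ℝ)) * t⌋₊ + q ∧
        ∃ s : Fin (n - ℓ) → ℝ, (∀ j, 0 < s j) ∧ Monotone s ∧
          (∃ c : ℝ, c ≠ 0 ∧
            derivative^[⌊((n : ℝ) * (mseq n : ℝ)) * t⌋₊]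
                (∏ j, (X ^ (mseq n) - C (r n j ^ (mseq n))))
              = C c * X ^ q * ∏ j, (X ^ (mseq n) - C (s j ^ (mseq n)))) ∧
          ∀ j : Fin (n - ℓ), 4 ≤ (j : ℕ) + 1 →
            ∀ j' : Fin n, (j' : ℕ) = (j : ℕ) + ℓ →
              Real.exp (-η ((j : ℕ) + 1)) * (((j : ℕ) : ℝ) / (((j : ℕ) : ℝ) + (n : ℝ) * t))
                  * r n j' ≤ s j ∧
              s j ≤ Real.exp (η ((j : ℕ) + 1)) * (((j : ℕ) : ℝ) / (((j : ℕ) : ℝ) + (n : ℝ) * t))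
                  * r n j' := by
  obtain ⟨g, hg, hg0, hfg, hglim⟩ := exists_antitone_majorant _
    (tendsto_two_mul_div mseq hgrowth) (fun n => by positivity)
  refine ⟨fun j => 2 / ((j : ℝ) - 1) + g j, ?_, ?_, ?_, ?_⟩
  · intro j hj
    have hj' : (4 : ℝ) ≤ j := by exact_mod_cast hj
    have : 0 < 2 / ((j : ℝ) - 1) := div_pos two_pos (by linarith)
    have := hg0 j
    linarith
  · intro j k hj hjk
    have hj' : (4 : ℝ) ≤ j := by exact_mod_cast hj
    have hjk' : (j : ℝ) ≤ k := by exact_mod_cast hjk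
    exact add_le_add
      (div_le_div_of_nonneg_left two_pos.le (by linarith) (by linarith)) (hg hjk)
  · have h : Tendsto (fun j : ℕ => 2 / ((j : ℝ) - 1)) atTop (𝓝 0) :=
      (tendsto_atTop_add_const_right atTop (-1 : ℝ)
        tendsto_natCast_atTop_atTop).const_div_atTop 2
    simpa using h.add hglim
  intro t ht _ _ _ _ r hr hr0 _
  obtain ⟨ht0, ht1⟩ := ht
  filter_upwards [tendsto_natCast_atTop_atTop.eventually_ge_atTop (1 / t),
    tendsto_natCast_atTop_atTop.eventually_ge_atTop (1 / (1 - t)),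
    eventually_ge_atTop 1] with n hn1 hn2 hn3
  rw [div_le_iff₀ ht0] at hn1
  rw [div_le_iff₀ (by linarith)] at hn2
  set m := mseq n with hmdef
  have hm1 : 1 ≤ m := hm n
  have hm' : (1 : ℝ) ≤ m := by exact_mod_cast hm1
  have hτ : 0 < (n : ℝ) * t := by linarith
  set K := ⌊((n : ℝ) * (m : ℝ)) * t⌋₊ with hKdef
  have hK : (K : ℝ) ≤ m * (n * t) := by
    have := Nat.floor_le (a := ((n : ℝ) * (m : ℝ)) * t) (by positivity)
    linarith
  have hK' : m * (n * t) - 1 ≤ (K : ℝ) := by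
    have := Nat.lt_floor_add_one (((n : ℝ) * (m : ℝ)) * t)
    linarith
  -- `⌊n m t⌋ ≥ 1` because `n t ≥ 1`.
  have hK1 : 1 ≤ K := Nat.le_floor (by push_cast; nlinarith)
  -- `ℓ = ⌈K / m⌉` and `q = ℓ m - K`.
  obtain ⟨ℓ, q, hq, hℓ⟩ : ∃ ℓ q : ℕ, q < m ∧ ℓ * m = K + q := by
    refine ⟨(K + m - 1) / m, m - 1 - (K + m - 1) % m, by omega, ?_⟩
    have h1 := Nat.div_add_mod (K + m - 1) m
    have h2 := Nat.mod_lt (K + m - 1) (show 0 < m by omega)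
    rw [mul_comm]
    omega
  have hℓ' : (ℓ : ℝ) * m = K + q := by exact_mod_cast hℓ
  have hq' : (q : ℝ) + 1 ≤ m := by exact_mod_cast hq
  have hq0 : (0 : ℝ) ≤ q := by positivity
  have hm0 : (0 : ℝ) < m := by linarith
  have hℓu : (ℓ : ℝ) < n * t + 1 := by
    refine lt_of_mul_lt_mul_right ?_ hm0.le
    linarith
  have hℓl : (n : ℝ) * t - 1 ≤ ℓ := by
    refine le_of_mul_le_mul_right ?_ hm0
    linarith
  have hℓ1 : 1 ≤ ℓ := by
    rcases Nat.eq_zero_or_pos ℓ with h | h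
    · rw [h] at hℓ; omega
    · exact h
  have hℓn : ℓ < n := by
    have : (ℓ : ℝ) < n := by linarith
    exact_mod_cast this
  obtain ⟨s, hs, hs0, c, hc, heq⟩ := iterate_derivative_factors hm1 (r n) (hr n) (hr0 n) K
    (n - ℓ) q (by
      have h1 : (n - ℓ) * m + ℓ * m = n * m := by rw [← add_mul, Nat.sub_add_cancel hℓn.le]
      omega) hq
  refine ⟨ℓ, q, hℓ1, by omega, hℓl, hℓu.le, by omega, hℓ, s, hs0, hs.monotone,
    ⟨c, hc, heq⟩, ?_⟩
  intro j hj j' hj'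
  have hj1 : 1 ≤ (j : ℕ) := by omega
  obtain ⟨hb1, hb2⟩ := root_bounds hm1 (Nat.sub_le n ℓ) hτ hq hK hK' hℓ (r n) (hr n) (hr0 n)
    s hs hs0 c hc heq j hj1 j' hj'
  refine log_root_bounds hm1 (by exact_mod_cast hj1) hτ (hr0 n j') (hs0 j) ?_ hb1 hb2
  have h := hfg ((j : ℕ) + 1) n (by have := j.2; omega)
  push_cast
  rw [add_sub_cancel_right]
  linarith
end
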